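/- arXiv:1707.09290 — 3 statements merged into one kernel-verified Lean document; each statement's English description precedes it below -/
import Mathlib

section
/- Let A be a finite-dimensional unital associative F-algebra and let V be an absolutely irreducible A-module, i.e., a finite-dimensional irreducible (simple) A-module with dim_F End_A(V) = 1. Then V is zero action determined. -/
/-- A unital left `A`-module `V` (with compatible `F`-vector space structure) is
*zero action determined* (zad) if every `F`-bilinear map `f : A × V → F` vanishing on
pairs with zero action is of the form `f(x, v) = Φ(x • v)` for some linear `Φ`. -/
def IsZad (F A V : Type*) [Field F] [Ring A] [Algebra F A]
    [AddCommGroup V] [Module F V] [Module A V] [IsScalarTower F A V] : Prop :=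
  ∀ f : A →ₗ[F] V →ₗ[F] F,
    (∀ (a : A) (m : V), a • m = 0 → f a m = 0) →
    ∃ Φ : V →ₗ[F] F, ∀ (x : A) (v : V), f x v = Φ (x • v)

/-!
By Jacobson's density theorem, when every endomorphism of `V` is a scalar, `A` moves any finite
linearly independent family in `V` to any prescribed family. Fix `u ≠ 0`. Applying the zero-action
hypothesis to pairs `(a, u)` yields `Φ` with `f a u = Φ (a • u)`. If `v` is not a multiple of `u`,
choose `a` with `a • u = a • v = x • v`. The pairs `(x - a, v)` and `(a, v - u)` have zero action,
so `f x v = f a v = f a u = Φ (a • u) = Φ (x • v)`.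
-/

open Module

theorem exists_smul_eq_apply_of_surjective_algebraMap_end {R A M : Type*} [CommSemiring R] [Ring A]
    [Algebra R A] [AddCommGroup M] [Module R M] [Module A M] [IsScalarTower R A M]
    [IsSemisimpleModule A M] (hscalar : Function.Surjective (algebraMap R (End A M)))
    (P : M →ₗ[R] M) (s : Finset M) : ∃ a : A, ∀ m ∈ s, a • m = P m := by
  let biendomorphism : End (End A M) M :=
    { toFun := P
      map_add' := P.map_add
      map_smul' := fun φ m => by
        obtain ⟨c, rfl⟩ := hscalar φ
        exact P.map_smul c m }
  obtain ⟨a, ha⟩ := jacobson_density biendomorphism s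
  exact ⟨a, fun m hm => (ha m hm).symm⟩

section ZeroAction

variable {R A M N : Type*} [CommSemiring R] [Ring A] [Module R A] [AddCommGroup M] [Module R M]
  [Module A M] [AddCommGroup N] [Module R N] {f : A →ₗ[R] M →ₗ[R] N}

theorem apply_eq_apply_of_smul_eq_smul_left {m : M} (hf : ∀ a, a • m = 0 → f a m = 0) {a b : A}
    (h : a • m = b • m) : f a m = f b m := by
  have hsub : f (a - b) m = 0 := hf _ (by rw [sub_smul, h, sub_self])
  rwa [map_sub, LinearMap.sub_apply, sub_eq_zero] at hsub

theorem apply_eq_apply_of_smul_eq_smul_right {a : A} (hf : ∀ m, a • m = 0 → f a m = 0) {m n : M}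
    (h : a • m = a • n) : f a m = f a n := by
  have hsub : f a (m - n) = 0 := hf _ (by rw [smul_sub, h, sub_self])
  rwa [map_sub, sub_eq_zero] at hsub

end ZeroAction

section FieldCoefficients

variable {F A V : Type*} [Field F] [Ring A] [Algebra F A] [AddCommGroup V] [Module F V]
  [Module A V] [IsScalarTower F A V]

theorem exists_smul_eq_of_linearIndependent [IsSemisimpleModule A V] {ι : Type*} [Finite ι]
    (hscalar : Function.Surjective (algebraMap F (End A V))) {v : ι → V}
    (hv : LinearIndependent F v) (w : ι → V) : ∃ a : A, ∀ i, a • v i = w i := by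
  obtain ⟨coord, hcoord⟩ := (Finsupp.linearCombination F v).exists_leftInverse_of_injective
    (LinearMap.ker_eq_bot.mpr hv)
  obtain ⟨a, ha⟩ := exists_smul_eq_apply_of_surjective_algebraMap_end hscalar
    (Finsupp.linearCombination F w ∘ₗ coord) (Set.finite_range v).toFinset
  have hcoord_apply (i : ι) : coord (v i) = Finsupp.single i 1 := by
    simpa using LinearMap.congr_fun hcoord (Finsupp.single i 1)
  exact ⟨a, fun i => by simpa [hcoord_apply] using ha (v i) (by simp)⟩

theorem exists_dual_apply_smul_eq {f : A →ₗ[F] V →ₗ[F] F} {u : V}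
    (hf : ∀ a, a • u = 0 → f a u = 0) : ∃ Φ : V →ₗ[F] F, ∀ a, f a u = Φ (a • u) := by
  let orbit : A →ₗ[F] V := (LinearMap.toSpanSingleton A V u).restrictScalars F
  have hfactor : f.flip u ∈ LinearMap.range orbit.dualMap := by
    rw [LinearMap.range_dualMap_eq_dualAnnihilator_ker, Submodule.mem_dualAnnihilator]
    exact hf
  obtain ⟨Φ, hΦ⟩ := hfactor
  exact ⟨Φ, fun a => (LinearMap.congr_fun hΦ a).symm⟩

theorem isZad_of_forall_linearIndependent_exists_smul_eq
    (h : ∀ u v w : V, LinearIndependent F ![u, v] → ∃ a : A, a • u = w ∧ a • v = w) :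
    IsZad F A V := by
  intro f hf
  cases subsingleton_or_nontrivial V with
  | inl _ => exact ⟨0, fun x v => by simp [Subsingleton.elim v 0]⟩
  | inr _ =>
    obtain ⟨u, hu⟩ := exists_ne (0 : V)
    obtain ⟨Φ, hΦ⟩ := exists_dual_apply_smul_eq fun a => hf a u
    refine ⟨Φ, fun x v => ?_⟩
    by_cases hv : ∃ c : F, c • u = v
    · obtain ⟨c, rfl⟩ := hv
      rw [map_smul, hΦ, smul_comm x c u, map_smul Φ]
    · obtain ⟨a, hau, hav⟩ :=
        h u v (x • v) ((LinearIndependent.pair_iff' hu).mpr (not_exists.mp hv))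
      calc
        f x v = f a v := apply_eq_apply_of_smul_eq_smul_left (fun b => hf b v) hav.symm
        _ = f a u := apply_eq_apply_of_smul_eq_smul_right (hf a) (hav.trans hau.symm)
        _ = Φ (a • u) := hΦ a
        _ = Φ (x • v) := by rw [hau]

theorem stmt_10_general [IsSemisimpleModule A V] (habs : finrank F (End A V) = 1) :
    IsZad F A V := by
  have hscalar : Function.Surjective (algebraMap F (End A V)) :=
    (Algebra.finrank_eq_one_iff_bijective_algebraMap.mp habs).surjective
  refine isZad_of_forall_linearIndependent_exists_smul_eq fun u v w huv => ?_
  obtain ⟨a, ha⟩ := exists_smul_eq_of_linearIndependent hscalar huv ![w, w]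
  exact ⟨a, ha 0, ha 1⟩

end FieldCoefficients

/-- an absolutely irreducible module over a finite-dimensional algebra is zad. -/
theorem stmt_10 (F A V : Type*) [Field F] [Ring A] [Algebra F A] [FiniteDimensional F A]
    [AddCommGroup V] [Module F V] [Module A V] [IsScalarTower F A V]
    [FiniteDimensional F V] [IsSimpleModule A V]
    (habs : Module.finrank F (V →ₗ[A] V) = 1) :
    IsZad F A V :=
  stmt_10_general habs
end

section
/- Suppose A is a finite-dimensional unital associative F-algebra. Let E be the unital F-subalgebra of A generated by all idempotent elements of A, let I be the two-sided ideal of A generated by all commutators [p, a] = p a − a p with p an idempotent of A and a ∈ A, and let R be the Jacobson radical of A. Let e be an idempotent in A and let Ae denote the left ideal A·e regarded as a left A-module. Then the following are equivalent: (1) Ae is zero action determined; (2) Ae/Re is zero action determined and Re ⊆ Ie; (3) Ae/Re is zero action determined and every 1-dimensional (over F) quotient A-module S of Ae satisfies Ext_A^1(S, S) = 0 (equivalently, every short exact sequence of A-modules 0 → S → X → S → 0 splits); (4) Ae = Ee. -/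
/-- The two-sided ideal of `A` generated by all commutators `[p, a] = p*a - a*p` with
`p` an idempotent of `A` and `a ∈ A`. -/
def commutatorIdeal (A : Type*) [Ring A] : TwoSidedIdeal A :=
  TwoSidedIdeal.span {c : A | ∃ p a : A, IsIdempotentElem p ∧ c = p * a - a * p}

/-- The unital subalgebra of `A` generated by all idempotent elements. -/
def idemSubalgebra (F A : Type*) [Field F] [Ring A] [Algebra F A] : Subalgebra F A :=
  Algebra.adjoin F {x : A | IsIdempotentElem x}

/-- `Re = {r * e : r ∈ R}` (with `R` the Jacobson radical) viewed as a submodule of the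
left `A`-module `Ae`. -/
def radSubmodule (A : Type*) [Ring A] (e : A) :
    Submodule A ↥(Ideal.span {e} : Ideal A) :=
  Submodule.comap (Ideal.span {e} : Ideal A).subtype
    (Submodule.map (LinearMap.toSpanSingleton A A e) (Ideal.jacobson (⊥ : Ideal A)))

universe u

/-!
For a two-sided ideal `T` containing all commutators `[p, a]`, the left ideal
`T.colon {e} = {a | a * e ∈ T}` is two-sided, and `A ⧸ T.colon {e} ≅ Ae ⧸ Te`. If `e` is a
primitive idempotent outside `T`, then in this quotient ring every element is nilpotent or
invertible, and such an algebra is zero action determined only if it is `F` itself. Hence, when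
`A ⧸ T.colon {e}` is zero action determined, `e` is a sum of idempotents `p` that either lie in `T`
or have for `T.colon {p}` the kernel of a character `φ : A →ₐ[F] F`.

With `T = I` this gives `Ae ⊆ E`, because `I ⊆ E` and `a * p ∈ φ a • p + I`. With `T = I ⊔ R` it
reduces `Re ⊆ Ie` to `ker φ = (ker φ)²`, since `R` is nilpotent; and `ker φ / (ker φ)²` is dual to
the self-extensions of the one-dimensional module `A ⧸ ker φ`. Conversely, a bilinear map that
vanishes on zero action is balanced over `E`, so `Ee = Ae` makes `Ae` zero action determined; and
`E` acts by scalars on every self-extension of a one-dimensional module, so such an extension splits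
when `Ae ⊆ E` and `e` acts as the identity.
-/


section IdempotentSubalgebra

variable {F A : Type*} [Field F] [Ring A] [Algebra F A]

theorem mem_idemSubalgebra {p : A} (hp : IsIdempotentElem p) : p ∈ idemSubalgebra F A :=
  Algebra.subset_adjoin hp

theorem mul_mul_one_sub_mem_idemSubalgebra {p : A} (hp : IsIdempotentElem p) (a : A) :
    p * a * (1 - p) ∈ idemSubalgebra F A := by
  have h_idem : IsIdempotentElem (p + p * a * (1 - p)) := by
    have h_zero : (1 - p) * p = 0 := hp.one_sub_mul_self
    calc (p + p * a * (1 - p)) * (p + p * a * (1 - p))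
        = p * p + p * p * a * (1 - p) + p * a * ((1 - p) * p)
            + p * a * ((1 - p) * p) * a * (1 - p) := by noncomm_ring
      _ = p + p * a * (1 - p) := by simp only [h_zero, hp.eq, mul_zero, zero_mul, add_zero]
  simpa only [add_sub_cancel_left] using
    sub_mem (mem_idemSubalgebra (F := F) h_idem) (mem_idemSubalgebra hp)

theorem commutator_mem_idemSubalgebra {x : A} (hx : x ∈ idemSubalgebra F A) (a : A) :
    x * a - a * x ∈ idemSubalgebra F A := by
  induction hx using Algebra.adjoin_induction generalizing a with
  | mem p hp =>
    convert sub_mem (mul_mul_one_sub_mem_idemSubalgebra (F := F) hp a)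
      (mul_mul_one_sub_mem_idemSubalgebra (IsIdempotentElem.one_sub hp) a) using 1
    noncomm_ring
  | algebraMap r => simp [Algebra.commutes r a]
  | add x y _ _ hx hy =>
    convert add_mem (hx a) (hy a) using 1
    noncomm_ring
  | mul x y _ _ hx hy =>
    convert add_mem (hx (y * a)) (hy (a * x)) using 1
    noncomm_ring

theorem mul_commutator_mul_mem_idemSubalgebra {x y : A} (hx : x ∈ idemSubalgebra F A)
    (hy : y ∈ idemSubalgebra F A) (a b : A) :
    a * (x * y - y * x) * b ∈ idemSubalgebra F A := by
  have h_right (c : A) : (x * y - y * x) * c ∈ idemSubalgebra F A := by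
    convert sub_mem (commutator_mem_idemSubalgebra hx (y * c))
      (mul_mem hy (commutator_mem_idemSubalgebra hx c)) using 1
    noncomm_ring
  convert sub_mem (h_right (b * a)) (commutator_mem_idemSubalgebra (h_right b) a) using 1
  noncomm_ring

theorem lie_lie_lie_eq_of_isIdempotentElem {R : Type*} [Ring R] {p : R}
    (hp : IsIdempotentElem p) (a : R) : ⁅p, ⁅p, ⁅p, a⁆⁆⁆ = ⁅p, a⁆ := by
  have h_absorb (x : R) : p * (p * x) = p * x := by rw [← mul_assoc, hp.eq]
  simp only [Ring.lie_def, mul_sub, sub_mul, mul_assoc, hp.eq, h_absorb]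
  abel

-- `[p, a] = [p, [p, [p, a]]]` is a commutator of two elements of the subalgebra.
theorem mem_idemSubalgebra_of_mem_commutatorIdeal {x : A} (hx : x ∈ commutatorIdeal A) :
    x ∈ idemSubalgebra F A := by
  rw [commutatorIdeal, TwoSidedIdeal.mem_span_iff_mem_addSubgroup_closure] at hx
  refine (AddSubgroup.closure_le (idemSubalgebra F A).toSubring.toAddSubgroup).2 ?_ hx
  rintro _ ⟨_, ⟨a, -, _, ⟨p, c, hp, rfl⟩, rfl⟩, b, -, rfl⟩
  have h_comm : ⁅p, ⁅p, c⁆⁆ ∈ idemSubalgebra F A :=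
    commutator_mem_idemSubalgebra (mem_idemSubalgebra hp) _
  have h_mem := mul_commutator_mul_mem_idemSubalgebra (mem_idemSubalgebra hp) h_comm a b
  rwa [← Ring.lie_def, lie_lie_lie_eq_of_isIdempotentElem hp] at h_mem

theorem commutator_mem_commutatorIdeal {p : A} (hp : IsIdempotentElem p) (a : A) :
    p * a - a * p ∈ (commutatorIdeal A).asIdeal :=
  TwoSidedIdeal.subset_span ⟨p, a, hp, rfl⟩

theorem coe_span_singleton_eq_iff {e : A} (he : IsIdempotentElem e) :
    (↑(Ideal.span {e} : Ideal A) : Set A) = {x : A | ∃ a ∈ idemSubalgebra F A, a * e = x} ↔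
      ∀ a, a * e ∈ idemSubalgebra F A := by
  refine ⟨fun h a => ?_, fun h => ?_⟩
  · have ha : a * e ∈ (↑(Ideal.span {e} : Ideal A) : Set A) :=
      Ideal.mem_span_singleton'.2 ⟨a, rfl⟩
    rw [h] at ha
    obtain ⟨b, hb, hba⟩ := ha
    exact hba ▸ mul_mem hb (mem_idemSubalgebra he)
  · ext x
    simp only [SetLike.mem_coe, Ideal.mem_span_singleton', Set.mem_ofPred_eq]
    refine ⟨?_, fun ⟨a, _, hax⟩ => ⟨a, hax⟩⟩
    rintro ⟨a, rfl⟩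
    exact ⟨a * e, h a, by rw [mul_assoc, he.eq]⟩

end IdempotentSubalgebra

section PrimitiveIdempotent

variable {A : Type*} [Ring A]

/-- A nonzero idempotent `e` is primitive if `0` and `e` are the only idempotents `p` with
`e * p = p = p * e`, equivalently if `e` is not a sum of two nonzero orthogonal idempotents. -/
structure IsPrimitiveIdempotent (e : A) : Prop where
  isIdempotentElem : IsIdempotentElem e
  ne_zero : e ≠ 0
  eq_zero_or_eq : ∀ p, IsIdempotentElem p → e * p = p → p * e = p → p = 0 ∨ p = e

theorem span_singleton_lt_of_isIdempotentElem {e p : A} (hp : IsIdempotentElem p) (hep : e * p = p)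
    (hpe : p * e = p) (hne : p ≠ e) : (Ideal.span {p} : Ideal A) < Ideal.span {e} := by
  refine lt_of_le_of_ne ?_ fun h_span => hne ?_
  · exact (Ideal.span_singleton_le_iff_mem _).2 (Ideal.mem_span_singleton'.2 ⟨p, hpe⟩)
  · obtain ⟨a, ha⟩ := Ideal.mem_span_singleton'.1
      (h_span ▸ Ideal.mem_span_singleton_self e : e ∈ Ideal.span {p})
    rw [← hep, ← ha, mul_assoc, hp.eq]

theorem idempotent_induction [IsArtinianRing A] {P : A → Prop} (zero : P 0)
    (primitive : ∀ p, IsPrimitiveIdempotent p → P p)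
    (add : ∀ p q, IsIdempotentElem p → IsIdempotentElem q → p * q = 0 → q * p = 0 →
      P p → P q → P (p + q))
    {e : A} (he : IsIdempotentElem e) : P e := by
  obtain ⟨s, hs⟩ : ∃ s : Ideal A, s = Ideal.span {e} := ⟨_, rfl⟩
  induction s using WellFoundedLT.induction generalizing e with
  | ind s ih =>
  subst hs
  by_cases h_prim : IsPrimitiveIdempotent e
  · exact primitive e h_prim
  by_cases h_zero : e = 0
  · exact h_zero ▸ zero
  obtain ⟨p, hp, hep, hpe, hp0, hpe'⟩ : ∃ p, IsIdempotentElem p ∧ e * p = p ∧ p * e = p ∧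
      p ≠ 0 ∧ p ≠ e := by
    by_contra! h
    exact h_prim ⟨he, h_zero, fun p hp hep hpe => or_iff_not_imp_left.2 (h p hp hep hpe)⟩
  have hpq : p * (e - p) = 0 := by rw [mul_sub, hpe, hp.eq, sub_self]
  have hqp : (e - p) * p = 0 := by rw [sub_mul, hep, hp.eq, sub_self]
  have heq : e * (e - p) = e - p := by rw [mul_sub, he.eq, hep]
  have hqe : (e - p) * e = e - p := by rw [sub_mul, he.eq, hpe]
  have hq : IsIdempotentElem (e - p) := by
    rw [IsIdempotentElem, sub_mul, heq, hpq, sub_zero]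
  have h_sum := add p (e - p) hp hq hpq hqp
    (ih _ (span_singleton_lt_of_isIdempotentElem hp hep hpe hpe') hp rfl)
    (ih _ (span_singleton_lt_of_isIdempotentElem hq heq hqe (by simpa using hp0)) hq rfl)
  rwa [add_sub_cancel] at h_sum

-- Fitting decomposition of the left module `A` with respect to right multiplication by `x`.
theorem exists_pow_mul_mul_pow_eq [IsArtinianRing A] (x : A) :
    ∃ n ≠ 0, ∃ y, x ^ n * y * x ^ n = x ^ n := by
  let ρ : Module.End A A := LinearMap.toSpanSingleton A A x
  have hρ (n : ℕ) (a : A) : (ρ ^ n) a = a * x ^ n := by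
    induction n with
    | zero => simp
    | succ n ih => rw [pow_succ', Module.End.mul_apply, ih, pow_succ, ← mul_assoc]; rfl
  obtain ⟨n, h_compl, hn⟩ :=
    (ρ.eventually_isCompl_ker_pow_range_pow.and (Filter.eventually_ne_atTop 0)).exists
  obtain ⟨k, hk, _, ⟨y, rfl⟩, h_one⟩ := Submodule.mem_sup.1
    (h_compl.sup_eq_top ▸ Submodule.mem_top : (1 : A) ∈ _)
  rw [LinearMap.mem_ker, hρ] at hk
  rw [hρ] at h_one
  have h_mul : x ^ n * k = x ^ n - x ^ n * y * x ^ n := by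
    rw [eq_sub_iff_add_eq, mul_assoc, ← mul_add, h_one, mul_one]
  refine ⟨n, hn, y, (sub_eq_zero.1 ?_).symm⟩
  refine Submodule.disjoint_def.1 h_compl.disjoint _ ?_ ⟨1 - x ^ n * y, ?_⟩
  · rw [LinearMap.mem_ker, hρ, ← h_mul, mul_assoc, hk, mul_zero]
  · rw [hρ, sub_mul, one_mul]

theorem IsPrimitiveIdempotent.eq_zero_or_mul_eq {e y z : A} (he : IsPrimitiveIdempotent e)
    (hez : e * z = z) (hze : z * e = z) (hz : z * y * z = z) :
    z = 0 ∨ e * y * z = e ∧ z * y * e = e := by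
  have hee : e * e = e := he.isIdempotentElem
  have h_left : e * y * z = 0 ∨ e * y * z = e := by
    refine he.eq_zero_or_eq _ ?_ ?_ ?_
    · calc e * y * z * (e * y * z) = e * y * ((z * e) * y * z) := by noncomm_ring
        _ = e * y * z := by rw [hze, hz]
    · rw [← mul_assoc, ← mul_assoc, hee]
    · rw [mul_assoc, hze]
  have h_right : z * y * e = 0 ∨ z * y * e = e := by
    refine he.eq_zero_or_eq _ ?_ ?_ ?_
    · calc z * y * e * (z * y * e) = z * y * (e * z) * (y * e) := by noncomm_ring
        _ = z * y * e := by rw [hez, hz, mul_assoc]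
    · rw [← mul_assoc, ← mul_assoc, hez]
    · rw [mul_assoc, hee]
  have h_zero_of_left (h : e * y * z = 0) : z = 0 := by
    calc z = (z * e) * y * z := by rw [hze, hz]
      _ = z * (e * y * z) := by noncomm_ring
      _ = 0 := by rw [h, mul_zero]
  have h_zero_of_right (h : z * y * e = 0) : z = 0 := by
    calc z = z * y * (e * z) := by rw [hez, hz]
      _ = z * y * e * z := by noncomm_ring
      _ = 0 := by rw [h, zero_mul]
  exact (h_left.imp_left h_zero_of_left).elim Or.inl fun h =>
    (h_right.imp_left h_zero_of_right).imp_right fun h' => ⟨h, h'⟩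

theorem IsPrimitiveIdempotent.isNilpotent_or_isUnit_map [IsArtinianRing A] {e : A}
    (he : IsPrimitiveIdempotent e) {B : Type*} [Ring B] (q : A →+* B) (hq : q e = 1) (a : A) :
    IsNilpotent (q a) ∨ IsUnit (q a) := by
  have hee : e * e = e := he.isIdempotentElem
  obtain ⟨n, hn, y, hy⟩ := exists_pow_mul_mul_pow_eq (e * a * e)
  have hez : e * (e * a * e) ^ n = (e * a * e) ^ n := by
    rw [← Nat.succ_pred_eq_of_ne_zero hn, pow_succ']
    simp only [← mul_assoc, hee]
  have hze : (e * a * e) ^ n * e = (e * a * e) ^ n := by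
    rw [← Nat.succ_pred_eq_of_ne_zero hn, pow_succ]
    simp only [mul_assoc, hee]
  have hqz : q ((e * a * e) ^ n) = q a ^ n := by simp [hq]
  rcases he.eq_zero_or_mul_eq hez hze hy with hz | ⟨h_left, h_right⟩
  · exact Or.inl ⟨n, by rw [← hqz, hz, map_zero]⟩
  · have h_left' : q y * q a ^ n = 1 := by simpa [hq] using congrArg q h_left
    have h_right' : q a ^ n * q y = 1 := by simpa [hq] using congrArg q h_right
    exact Or.inr ((isUnit_pow_iff hn).1 ⟨⟨q a ^ n, q y, h_right', h_left'⟩, rfl⟩)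

end PrimitiveIdempotent

section ZeroActionDetermined

variable {F A : Type*} [Field F] [Ring A] [Algebra F A]

theorem IsZad.of_surjective {V W : Type*} [AddCommGroup V] [Module F V] [Module A V]
    [IsScalarTower F A V] [AddCommGroup W] [Module F W] [Module A W] [IsScalarTower F A W]
    (h : IsZad F A V) (g : V →ₗ[A] W) (hg : Function.Surjective g) : IsZad F A W := by
  intro f hf
  obtain ⟨Φ, hΦ⟩ := h (f.compl₂ (g.restrictScalars F)) fun a v hav => by
    simpa using hf a (g v) (by rw [← map_smul, hav, map_zero])
  have h_factor (a : A) (v : V) : f a (g v) = Φ (a • v) := hΦ a v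
  refine ⟨f 1, fun a w => ?_⟩
  obtain ⟨v, rfl⟩ := hg w
  rw [h_factor, ← map_smul, h_factor, one_smul]

theorem IsZad.quotient_self {N : Ideal A} [N.IsTwoSided] (h : IsZad F A (A ⧸ N)) :
    IsZad F (A ⧸ N) (A ⧸ N) := by
  intro f hf
  obtain ⟨Φ, hΦ⟩ := h (f.comp (Ideal.Quotient.mkₐ F N).toLinearMap) fun a v hav => hf _ v hav
  refine ⟨Φ, fun x v => ?_⟩
  obtain ⟨a, rfl⟩ := Ideal.Quotient.mk_surjective x
  exact hΦ a v

theorem map_mul_eq_map_smul_of_mem_idemSubalgebra {M : Type*} [AddCommGroup M] [Module F M]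
    [Module A M] [IsScalarTower F A M] {f : A →ₗ[F] M →ₗ[F] F}
    (hf : ∀ a m, a • m = 0 → f a m = 0) {x : A} (hx : x ∈ idemSubalgebra F A) (a : A) (m : M) :
    f (a * x) m = f a (x • m) := by
  induction hx using Algebra.adjoin_induction generalizing a m with
  | mem p hp =>
    have hpp : p * p = p := hp
    have h_left : f (a * p) (m - p • m) = 0 :=
      hf _ _ (by rw [smul_sub, smul_smul, mul_assoc, hpp, sub_self])
    have h_right : f (a - a * p) (p • m) = 0 :=
      hf _ _ (by rw [smul_smul, sub_mul, mul_assoc, hpp, sub_self, zero_smul])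
    rw [map_sub, sub_eq_zero] at h_left
    rw [map_sub, LinearMap.sub_apply, sub_eq_zero] at h_right
    rw [h_left, h_right]
  | algebraMap r =>
    rw [algebraMap_smul, ← Algebra.commutes, ← Algebra.smul_def, map_smul, map_smul,
      LinearMap.smul_apply]
  | add x y _ _ hx hy => rw [mul_add, map_add, LinearMap.add_apply, hx, hy, add_smul, map_add]
  | mul x y _ _ hx hy => rw [← mul_assoc, hy, hx, smul_smul]

theorem isZad_of_forall_exists_idemSubalgebra_smul_eq {M : Type*} [AddCommGroup M] [Module F M]
    [Module A M] [IsScalarTower F A M] (m : M)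
    (h : ∀ v : M, ∃ x ∈ idemSubalgebra F A, x • m = v) : IsZad F A M := by
  intro f hf
  have h_eq_of_smul_eq {a b : A} (hab : a • m = b • m) : f a m = f b m := by
    rw [← sub_eq_zero, ← LinearMap.sub_apply, ← map_sub]
    exact hf _ _ (by rw [sub_smul, hab, sub_self])
  refine ⟨f 1, fun a v => ?_⟩
  obtain ⟨x, hx, rfl⟩ := h v
  obtain ⟨y, hy, hym⟩ := h (a • x • m)
  calc f a (x • m) = f (a * x) m := (map_mul_eq_map_smul_of_mem_idemSubalgebra hf hx a m).symm
    _ = f y m := h_eq_of_smul_eq (by rw [mul_smul, hym])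
    _ = f 1 (y • m) := by
      rw [← map_mul_eq_map_smul_of_mem_idemSubalgebra hf hy, one_mul]
    _ = f 1 (a • x • m) := by rw [hym]

theorem isZad_span_singleton {e : A} (h : ∀ a, a * e ∈ idemSubalgebra F A)
    (he : IsIdempotentElem e) : IsZad F A ↥(Ideal.span {e} : Ideal A) := by
  refine isZad_of_forall_exists_idemSubalgebra_smul_eq
    ⟨e, Ideal.mem_span_singleton_self e⟩ fun ⟨v, hv⟩ => ?_
  obtain ⟨a, rfl⟩ := Ideal.mem_span_singleton'.1 hv
  exact ⟨a * e, h a, Subtype.ext (by simp [mul_assoc, he.eq])⟩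

end ZeroActionDetermined

section LocalAlgebra

theorem mem_jacobson_or_eq_zero_of_mul_eq_zero {B : Type*} [Ring B]
    (h : ∀ x : B, IsNilpotent x ∨ IsUnit x) {a b : B} (hab : a * b = 0) :
    a ∈ Ideal.jacobson (⊥ : Ideal B) ∨ b = 0 := by
  refine or_iff_not_imp_right.2 fun hb => Ideal.mem_jacobson_iff.2 fun y => ?_
  have h_nilpotent : IsNilpotent (y * a) := (h (y * a)).resolve_right fun h_unit =>
    hb (h_unit.mul_right_eq_zero.1 (by rw [mul_assoc, hab, mul_zero]))
  obtain ⟨z, hz⟩ := h_nilpotent.isUnit_one_add.exists_left_inv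
  refine ⟨z, (Submodule.mem_bot B).2 ?_⟩
  rw [← hz]
  noncomm_ring

-- Test zero action determinacy on `f x y = φ x * ψ y`, where `φ` kills the radical and `ψ` kills
-- the scalars.
theorem IsZad.bijective_algebraMap {F B : Type*} [Field F] [Ring B] [Algebra F B] [Nontrivial B]
    (hB : IsZad F B B) (h : ∀ x : B, IsNilpotent x ∨ IsUnit x) :
    Function.Bijective (algebraMap F B) := by
  refine ⟨(algebraMap F B).injective, fun b => ?_⟩
  by_contra hb
  have h_one_jacobson : (1 : B) ∉ (Ideal.jacobson (⊥ : Ideal B)).restrictScalars F := fun h_one =>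
    bot_ne_top (Ideal.jacobson_eq_top_iff.1 ((Ideal.eq_top_iff_one _).2 h_one))
  have hb_scalar : b ∉ (1 : Submodule F B) := fun h_mem => hb (Submodule.mem_one.1 h_mem)
  obtain ⟨φ, hφ_one, hφ⟩ := Submodule.exists_le_ker_of_notMem h_one_jacobson
  obtain ⟨ψ, hψ_b, hψ⟩ := Submodule.exists_le_ker_of_notMem hb_scalar
  obtain ⟨Φ, hΦ⟩ := hB (φ.smulRight ψ) fun x y hxy => by
    rcases mem_jacobson_or_eq_zero_of_mul_eq_zero h hxy with hx | rfl
    · have hφx : φ x = 0 := hφ hx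
      simp [hφx]
    · simp
  have hψ_one : ψ 1 = 0 := hψ (Submodule.one_le.1 le_rfl)
  have h_symm : φ 1 * ψ b = φ b * ψ 1 := by
    calc φ 1 * ψ b = Φ (1 * b) := hΦ 1 b
      _ = Φ (b * 1) := by rw [one_mul, mul_one]
      _ = φ b * ψ 1 := (hΦ b 1).symm
  rw [hψ_one, mul_zero] at h_symm
  exact mul_ne_zero hφ_one hψ_b h_symm

end LocalAlgebra

section TwoSidedIdeal

variable {A : Type*} [Ring A]

theorem isTwoSided_sup (I J : Ideal A) [I.IsTwoSided] [J.IsTwoSided] : (I ⊔ J).IsTwoSided where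
  mul_mem_of_left b ha := by
    obtain ⟨x, hx, y, hy, rfl⟩ := Submodule.mem_sup.1 ha
    rw [add_mul]
    exact Submodule.add_mem_sup (I.mul_mem_right b hx) (J.mul_mem_right b hy)

theorem isTwoSided_colon_singleton {T : Ideal A} [T.IsTwoSided] {e : A}
    (hT : ∀ a, e * a - a * e ∈ T) : (T.colon {e}).IsTwoSided where
  mul_mem_of_left {a} b ha := by
    rw [Submodule.mem_colon_singleton, smul_eq_mul] at ha ⊢
    convert T.sub_mem (T.mul_mem_right b ha) (T.mul_mem_left a (hT b)) using 1
    noncomm_ring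

theorem one_sub_mem_colon_singleton (T : Ideal A) {e : A} (he : IsIdempotentElem e) :
    1 - e ∈ T.colon {e} := by
  rw [Submodule.mem_colon_singleton, smul_eq_mul, he.one_sub_mul_self]
  exact T.zero_mem

theorem colon_singleton_sup_mul_le {I : Ideal A} [I.IsTwoSided] {e : A}
    (he : IsIdempotentElem e) (hI : ∀ a, e * a - a * e ∈ I) (J K : Ideal A) :
    (I ⊔ J).colon {e} * (I ⊔ K).colon {e} ≤ (I ⊔ J * K).colon {e} := by
  have h_mul : (I ⊔ J) * (I ⊔ K) ≤ I ⊔ J * K := by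
    rw [Ideal.sup_mul, Ideal.mul_sup J]
    exact sup_le (Ideal.mul_le_left.trans le_sup_left)
      (sup_le (Ideal.mul_le_right.trans le_sup_left) le_sup_right)
  refine Ideal.mul_le.2 fun x hx y hy => ?_
  rw [Submodule.mem_colon_singleton, smul_eq_mul] at hx hy ⊢
  have h_swap : x * (e * y - y * e) * e ∈ I ⊔ J * K :=
    Submodule.mem_sup_left (I.mul_mem_right e (I.mul_mem_left x (hI y)))
  have h_eq : x * y * e = x * e * (y * e) - x * (e * y - y * e) * e := by
    rw [mul_sub, sub_mul]
    simp only [mul_assoc, he.eq]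
    abel
  rw [h_eq]
  exact sub_mem (h_mul (Ideal.mul_mem_mul hx hy)) h_swap

theorem le_colon_singleton_of_isNilpotent {I J L : Ideal A} [I.IsTwoSided] {e : A}
    (he : IsIdempotentElem e) (hI : ∀ a, e * a - a * e ∈ I) (hJ : IsNilpotent J)
    (hL : L ≤ L * L) (hLJ : L ≤ (I ⊔ J).colon {e}) : L ≤ I.colon {e} := by
  have h_pow (n : ℕ) : L ≤ (I ⊔ J ^ n).colon {e} := by
    induction n with
    | zero => simp [Submodule.pow_zero, Ideal.one_eq_top]
    | succ n ih =>
      rw [Submodule.pow_succ]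
      exact hL.trans ((Ideal.mul_mono ih hLJ).trans (colon_singleton_sup_mul_le he hI _ _))
  obtain ⟨n, hn⟩ := hJ
  simpa [hn] using h_pow n

theorem map_toSpanSingleton_le_iff {e : A} (he : IsIdempotentElem e) {I J : Ideal A}
    [I.IsTwoSided] :
    Submodule.map (LinearMap.toSpanSingleton A A e) J ≤
        Submodule.map (LinearMap.toSpanSingleton A A e) I ↔ ∀ x ∈ J, x * e ∈ I := by
  refine ⟨fun h x hx => ?_, ?_⟩
  · obtain ⟨y, hy, hyx⟩ := h ⟨x, hx, rfl⟩
    exact (show y * e = x * e from hyx) ▸ I.mul_mem_right e hy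
  · rintro h _ ⟨x, hx, rfl⟩
    exact ⟨x * e, h x hx, by simp [mul_assoc, he.eq]⟩

theorem surjective_mkQ_comp_subtype_span_singleton {N : Ideal A} {e : A} (he : 1 - e ∈ N) :
    Function.Surjective (N.mkQ ∘ₗ (Ideal.span {e} : Ideal A).subtype) := by
  intro v
  obtain ⟨a, rfl⟩ := N.mkQ_surjective v
  refine ⟨⟨a * e, Ideal.mem_span_singleton'.2 ⟨a, rfl⟩⟩, (Submodule.Quotient.eq N).2 ?_⟩
  convert N.neg_mem (N.mul_mem_left a he) using 1
  simp [mul_sub]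

end TwoSidedIdeal

section Character

variable {F A : Type*} [Field F] [Ring A] [Algebra F A]

theorem exists_algHom_ker_eq_colon [IsArtinianRing A] {e : A} (he : IsPrimitiveIdempotent e)
    {T : Ideal A} [T.IsTwoSided] (hT : ∀ a, e * a - a * e ∈ T) (heT : e ∉ T)
    (h : IsZad F A (A ⧸ T.colon {e})) : ∃ φ : A →ₐ[F] F, RingHom.ker φ = T.colon {e} := by
  have := isTwoSided_colon_singleton hT
  set N := T.colon {e} with hN
  have h_nontrivial : Nontrivial (A ⧸ N) := Ideal.Quotient.nontrivial_iff.2 fun h_top => heT <| by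
    simpa [hN, Submodule.mem_colon_singleton] using (Ideal.eq_top_iff_one _).1 h_top
  have h_unit : Ideal.Quotient.mk N e = 1 :=
    (Ideal.Quotient.eq.2 (one_sub_mem_colon_singleton T he.isIdempotentElem)).symm
  have h_bij : Function.Bijective (Algebra.ofId F (A ⧸ N)) :=
    h.quotient_self.bijective_algebraMap fun x => by
      obtain ⟨a, rfl⟩ := Ideal.Quotient.mk_surjective x
      exact he.isNilpotent_or_isUnit_map _ h_unit a
  refine ⟨(AlgEquiv.ofBijective _ h_bij).symm.toAlgHom.comp (Ideal.Quotient.mkₐ F N), ?_⟩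
  ext a
  simp [RingHom.mem_ker, Ideal.Quotient.eq_zero_iff_mem]

theorem idempotent_induction_of_isZad [IsArtinianRing A] {T : Ideal A} [T.IsTwoSided]
    (hT : ∀ p a, IsIdempotentElem p → p * a - a * p ∈ T) {e : A} (he : IsIdempotentElem e)
    (h : IsZad F A (A ⧸ T.colon {e})) {P : A → Prop}
    (mem : ∀ p, IsIdempotentElem p → p ∈ T → P p)
    (character : ∀ p (φ : A →ₐ[F] F), IsIdempotentElem p → RingHom.ker φ = T.colon {p} →
      φ e = 1 → P p)
    (add : ∀ p q, P p → P q → P (p + q)) : P e := by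
  have h_colon {p q : A} (hp : IsIdempotentElem p) (hqp : q * p = 0) :
      T.colon {p + q} ≤ T.colon {p} := fun a ha => by
    rw [Submodule.mem_colon_singleton, smul_eq_mul] at ha ⊢
    simpa only [mul_assoc, add_mul, hp.eq, hqp, add_zero] using T.mul_mem_right p ha
  refine idempotent_induction (P := fun p => T.colon {e} ≤ T.colon {p} → P p) ?_ ?_ ?_ he le_rfl
  · exact fun _ => mem 0 IsIdempotentElem.zero T.zero_mem
  · intro p hp hep
    by_cases hpT : p ∈ T
    · exact mem p hp.isIdempotentElem hpT
    · obtain ⟨φ, hφ⟩ := exists_algHom_ker_eq_colon hp (hT p · hp.isIdempotentElem) hpT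
        (h.of_surjective _ (Submodule.factor_surjective hep))
      have h_one : φ (1 - e) = 0 := hφ.ge (hep (one_sub_mem_colon_singleton T he))
      rw [map_sub, map_one, sub_eq_zero] at h_one
      exact character p φ hp.isIdempotentElem hφ h_one.symm
  · exact fun p q hp hq hpq hqp ihp ihq h_le => add p q (ihp (h_le.trans (h_colon hp hqp)))
      (ihq (h_le.trans (add_comm p q ▸ h_colon hq hpq)))

end Character

section CommutatorIdeal

variable {F A : Type*} [Field F] [Ring A] [Algebra F A] [IsArtinianRing A]

theorem mul_mem_idemSubalgebra_of_isZad {e : A} (he : IsIdempotentElem e)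
    (h : IsZad F A (A ⧸ (commutatorIdeal A).asIdeal.colon {e})) (a : A) :
    a * e ∈ idemSubalgebra F A := by
  refine idempotent_induction_of_isZad (P := fun p => ∀ a, a * p ∈ idemSubalgebra F A)
    (fun _ a hp => commutator_mem_commutatorIdeal hp a) he h ?_ ?_ ?_ a
  · exact fun p _ hp a => mem_idemSubalgebra_of_mem_commutatorIdeal
      ((commutatorIdeal A).asIdeal.mul_mem_left a hp)
  · intro p φ hp hφ _ a
    have h_ker : a - algebraMap F A (φ a) ∈ RingHom.ker φ := by simp [RingHom.mem_ker]
    rw [hφ, Submodule.mem_colon_singleton, smul_eq_mul, sub_mul, ← Algebra.smul_def] at h_ker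
    exact (sub_add_cancel (a * p) (φ a • p)) ▸
      add_mem (mem_idemSubalgebra_of_mem_commutatorIdeal h_ker)
        (Subalgebra.smul_mem _ (mem_idemSubalgebra hp) (φ a))
  · exact fun p q hp hq a => by rw [mul_add]; exact add_mem (hp a) (hq a)

theorem mul_mem_commutatorIdeal_of_isZad {e : A} (he : IsIdempotentElem e)
    (h : IsZad F A
      (A ⧸ ((commutatorIdeal A).asIdeal ⊔ Ideal.jacobson (⊥ : Ideal A)).colon {e}))
    (h_ker : ∀ φ : A →ₐ[F] F, φ e = 1 → RingHom.ker φ ≤ RingHom.ker φ * RingHom.ker φ) :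
    ∀ r ∈ Ideal.jacobson (⊥ : Ideal A), r * e ∈ (commutatorIdeal A).asIdeal := by
  set I := (commutatorIdeal A).asIdeal
  set R := Ideal.jacobson (⊥ : Ideal A)
  have := isTwoSided_sup I R
  have hI (p a : A) (hp : IsIdempotentElem p) : p * a - a * p ∈ I :=
    commutator_mem_commutatorIdeal hp a
  have h_of_idem {p : A} (hp : IsIdempotentElem p) {L : Ideal A} (hL : L ≤ L * L)
      (hLR : L ≤ (I ⊔ R).colon {p}) : L ≤ I.colon {p} :=
    le_colon_singleton_of_isNilpotent hp (hI p · hp) IsArtinianRing.isNilpotent_jacobson_bot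
      hL hLR
  suffices R ≤ I.colon {e} from fun r hr => Submodule.mem_colon_singleton.1 (this hr)
  refine idempotent_induction_of_isZad (P := fun p => R ≤ I.colon {p})
    (fun p a hp => Submodule.mem_sup_left (hI p a hp)) he h ?_ ?_ ?_
  · intro p hp hpT
    have h_top : (⊤ : Ideal A) ≤ I.colon {p} := h_of_idem hp (by simp) fun a _ =>
      Submodule.mem_colon_singleton.2 ((I ⊔ R).mul_mem_left a hpT)
    exact le_top.trans h_top
  · intro p φ hp hφ hφe
    have hR_ker : R ≤ RingHom.ker φ :=
      hφ ▸ le_sup_right.trans (Ideal.le_colon (I := I ⊔ R) (S := {p}))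
    exact hR_ker.trans (h_of_idem hp (h_ker φ hφe) hφ.le)
  · intro p q hp hq r hr
    rw [Submodule.mem_colon_singleton, smul_add]
    exact add_mem (Submodule.mem_colon_singleton.1 (hp hr))
      (Submodule.mem_colon_singleton.1 (hq hr))

end CommutatorIdeal

section SelfExtension

theorem exists_exact_of_colon_singleton_eq {A : Type*} [Ring A] {N L : Ideal A} {l : A}
    (h_colon : L.colon {l} = N) (h_sup : L ⊔ Ideal.span {l} = N) :
    ∃ (i : (A ⧸ N) →ₗ[A] A ⧸ L) (p : (A ⧸ L) →ₗ[A] A ⧸ N), Function.Injective i ∧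
      Function.Surjective p ∧ LinearMap.range i = LinearMap.ker p := by
  have h_le : L ≤ N := h_sup ▸ le_sup_left
  have h_ker : N = LinearMap.ker (L.mkQ ∘ₗ LinearMap.toSpanSingleton A A l) := by
    rw [← h_colon]
    ext a
    simp [Submodule.mem_colon_singleton]
  refine ⟨N.liftQ _ h_ker.le, Submodule.factor h_le, ?_, Submodule.factor_surjective h_le, ?_⟩
  · exact LinearMap.ker_eq_bot.1 (Submodule.ker_liftQ_eq_bot _ _ _ h_ker.ge)
  · rw [Submodule.range_liftQ, LinearMap.range_comp, LinearMap.range_toSpanSingleton,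
      Submodule.factor, Submodule.mapQ, Submodule.ker_liftQ, LinearMap.ker_comp, Submodule.ker_mkQ,
      Submodule.comap_id, ← h_sup, Submodule.map_sup, Submodule.mkQ_map_self, bot_sup_eq]

theorem smul_eq_zero_of_retraction {A S X Q : Type*} [Ring A] [AddCommGroup S] [Module A S]
    [AddCommGroup X] [Module A X] [AddCommGroup Q] [Module A Q] {i : S →ₗ[A] X} {p : X →ₗ[A] Q}
    (h_exact : LinearMap.range i = LinearMap.ker p) {r : X →ₗ[A] S}
    (hr : r.comp i = LinearMap.id) {a : A} (hS : ∀ s : S, a • s = 0) (hQ : ∀ v : Q, a • v = 0)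
    (x : X) : a • x = 0 := by
  have h_ker : a • x ∈ LinearMap.ker p := by rw [LinearMap.mem_ker, map_smul, hQ]
  rw [← h_exact] at h_ker
  obtain ⟨s, hs⟩ := h_ker
  have hs0 : s = 0 := by
    calc s = r (i s) := (LinearMap.congr_fun hr s).symm
      _ = 0 := by rw [hs, map_smul, hS]
  rw [← hs, hs0, map_zero]

variable {F A : Type*} [Field F] [Ring A] [Algebra F A]

theorem finrank_quotient_ker (φ : A →ₐ[F] F) : Module.finrank F (A ⧸ RingHom.ker φ) = 1 := by
  have h_surj : Function.Surjective φ := fun c => ⟨algebraMap F A c, by simp⟩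
  rw [(Ideal.quotientKerAlgEquivOfSurjective h_surj).toLinearEquiv.finrank_eq,
    Module.finrank_self]

-- `L` lifts a hyperplane of `ker φ / (ker φ)²` that misses the class of `l`.
theorem exists_colon_singleton_eq_ker (φ : A →ₐ[F] F) {l : A} (hl : l ∈ RingHom.ker φ)
    (hl' : l ∉ RingHom.ker φ * RingHom.ker φ) :
    ∃ L : Ideal A, L.colon {l} = RingHom.ker φ ∧ L ⊔ Ideal.span {l} = RingHom.ker φ := by
  obtain ⟨g, hgl, hg⟩ := Submodule.exists_le_ker_of_notMem
    (p := (RingHom.ker φ * RingHom.ker φ).restrictScalars F) hl'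
  have hg_mul (a x : A) (hx : x ∈ RingHom.ker φ) : g (a * x) = φ a * g x := by
    have h_mem : (a - algebraMap F A (φ a)) * x ∈ RingHom.ker φ * RingHom.ker φ :=
      Ideal.mul_mem_mul (by simp [RingHom.mem_ker]) hx
    have h_zero : g ((a - algebraMap F A (φ a)) * x) = 0 := hg h_mem
    rwa [sub_mul, map_sub, ← Algebra.smul_def, map_smul, sub_eq_zero] at h_zero
  let L : Ideal A :=
    { carrier := {x | x ∈ RingHom.ker φ ∧ g x = 0}
      add_mem' := fun {x y} hx hy => ⟨add_mem hx.1 hy.1, by rw [map_add, hx.2, hy.2, add_zero]⟩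
      zero_mem' := ⟨zero_mem _, map_zero g⟩
      smul_mem' := fun a x hx => ⟨Ideal.mul_mem_left _ a hx.1, by
        rw [smul_eq_mul, hg_mul a x hx.1, hx.2, mul_zero]⟩ }
  refine ⟨L, ?_, le_antisymm ?_ fun x hx => ?_⟩
  · ext a
    have h_iff : g (a * l) = 0 ↔ a ∈ RingHom.ker φ := by
      rw [hg_mul a l hl, mul_eq_zero_iff_right hgl, RingHom.mem_ker]
    rw [Submodule.mem_colon_singleton, ← h_iff]
    exact and_iff_right (Ideal.mul_mem_left _ a hl)
  · exact sup_le (fun _ hx => hx.1) ((Ideal.span_singleton_le_iff_mem _).2 hl)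
  · have h_mem : x - (g x / g l) • l ∈ L := by
      refine ⟨sub_mem hx (Algebra.smul_def (g x / g l) l ▸ Ideal.mul_mem_left _ _ hl), ?_⟩
      rw [map_sub, map_smul, smul_eq_mul, div_mul_cancel₀ _ hgl, sub_self]
    rw [← sub_add_cancel x ((g x / g l) • l), Algebra.smul_def]
    exact Submodule.add_mem_sup (Algebra.smul_def (g x / g l) l ▸ h_mem)
      (Ideal.mem_span_singleton'.2 ⟨_, rfl⟩)

theorem ker_le_ker_mul_ker_of_splits {A : Type u} [Ring A] [Algebra F A] (φ : A →ₐ[F] F)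
    (h : ∀ (X : Type u) [AddCommGroup X] [Module A X] (i : (A ⧸ RingHom.ker φ) →ₗ[A] X)
      (p : X →ₗ[A] (A ⧸ RingHom.ker φ)), Function.Injective i → Function.Surjective p →
      LinearMap.range i = LinearMap.ker p →
      ∃ r : X →ₗ[A] (A ⧸ RingHom.ker φ), r.comp i = LinearMap.id) :
    RingHom.ker φ ≤ RingHom.ker φ * RingHom.ker φ := by
  intro l hl
  by_contra hl'
  obtain ⟨L, h_colon, h_sup⟩ := exists_colon_singleton_eq_ker φ hl hl'
  obtain ⟨i, p, hi, hp, h_exact⟩ := exists_exact_of_colon_singleton_eq h_colon h_sup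
  obtain ⟨r, hr⟩ := h (A ⧸ L) i p hi hp h_exact
  have hl_smul (v : A ⧸ RingHom.ker φ) : l • v = 0 := by
    obtain ⟨a, rfl⟩ := Submodule.Quotient.mk_surjective _ v
    exact (Submodule.Quotient.mk_eq_zero _).2 (Ideal.mul_mem_right a _ hl)
  have hlL : l ∈ L := by
    simpa [← Submodule.Quotient.mk_smul] using
      smul_eq_zero_of_retraction h_exact hr hl_smul hl_smul (Submodule.Quotient.mk 1)
  have h_one : (1 : A) ∈ RingHom.ker φ := by
    rwa [← h_colon, Submodule.mem_colon_singleton, one_smul]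
  simp [RingHom.mem_ker] at h_one

end SelfExtension

section ScalarAction

variable {F A S X Q : Type*} [Field F] [Ring A] [Algebra F A]
  [AddCommGroup S] [Module F S] [Module A S] [IsScalarTower F A S]
  [AddCommGroup X] [Module F X] [Module A X] [IsScalarTower F A X]
  [AddCommGroup Q] [Module A Q]

theorem forall_smul_eq_zero_or_forall_smul_eq_self (hS : Module.finrank F S = 1) {q : A}
    (hq : IsIdempotentElem q) : (∀ s : S, q • s = 0) ∨ ∀ s : S, q • s = s := by
  have := isSimpleModule_iff_finrank_eq_one.2 hS
  refine (eq_bot_or_eq_top (LinearMap.ker (Algebra.lsmul F F S q))).symm.imp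
    (fun h_top s => ?_) fun h_bot s => ?_
  · exact (h_top ▸ Submodule.mem_top : s ∈ LinearMap.ker (Algebra.lsmul F F S q))
  · have h_mem : s - q • s ∈ LinearMap.ker (Algebra.lsmul F F S q) := by
      simp [smul_sub, smul_smul, hq.eq]
    rw [h_bot, Submodule.mem_bot, sub_eq_zero] at h_mem
    exact h_mem.symm

theorem smul_eq_zero_of_exact {i : S →ₗ[A] X} {p : X →ₗ[A] Q}
    (h_exact : LinearMap.range i = LinearMap.ker p) {q : A} (hq : IsIdempotentElem q)
    (hS : ∀ s : S, q • s = 0) (hQ : ∀ v : Q, q • v = 0) (x : X) : q • x = 0 := by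
  have h_ker : q • x ∈ LinearMap.ker p := by rw [LinearMap.mem_ker, map_smul, hQ]
  rw [← h_exact] at h_ker
  obtain ⟨s, hs⟩ := h_ker
  rw [← hq.eq, mul_smul, ← hs, ← map_smul, hS, map_zero]

theorem smul_eq_self_of_exact {i : S →ₗ[A] X} {p : X →ₗ[A] Q}
    (h_exact : LinearMap.range i = LinearMap.ker p) {q : A} (hq : IsIdempotentElem q)
    (hS : ∀ s : S, q • s = s) (hQ : ∀ v : Q, q • v = v) (x : X) : q • x = x := by
  have h_zero : (1 - q) • x = 0 := smul_eq_zero_of_exact h_exact hq.one_sub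
    (fun s => by rw [sub_smul, one_smul, hS, sub_self])
    (fun v => by rw [sub_smul, one_smul, hQ, sub_self]) x
  rw [sub_smul, one_smul, sub_eq_zero] at h_zero
  exact h_zero.symm

theorem exists_forall_smul_eq_of_mem_idemSubalgebra
    (h : ∀ q : A, IsIdempotentElem q → (∀ y : X, q • y = 0) ∨ ∀ y : X, q • y = y) {x : A}
    (hx : x ∈ idemSubalgebra F A) : ∃ c : F, ∀ y : X, x • y = c • y := by
  induction hx using Algebra.adjoin_induction with
  | mem q hq =>
    rcases h q hq with hq | hq
    · exact ⟨0, fun y => by rw [hq, zero_smul]⟩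
    · exact ⟨1, fun y => by rw [hq, one_smul]⟩
  | algebraMap c => exact ⟨c, algebraMap_smul A c⟩
  | add x y _ _ hx hy =>
    obtain ⟨c, hc⟩ := hx
    obtain ⟨d, hd⟩ := hy
    exact ⟨c + d, fun v => by rw [add_smul, add_smul, hc, hd]⟩
  | mul x y _ _ hx hy =>
    obtain ⟨c, hc⟩ := hx
    obtain ⟨d, hd⟩ := hy
    exact ⟨c * d, fun v => by rw [mul_smul, mul_smul, hd, hc]⟩

theorem exists_retraction_of_forall_exists_smul_eq
    (h : ∀ a : A, ∃ c : F, ∀ y : X, a • y = c • y) (i : S →ₗ[A] X)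
    (hi : Function.Injective i) : ∃ r : X →ₗ[A] S, r.comp i = LinearMap.id := by
  obtain ⟨r, hr⟩ := (i.restrictScalars F).exists_leftInverse_of_injective
    (LinearMap.ker_eq_bot.2 hi)
  refine ⟨{ r with map_smul' := fun a y => ?_ }, LinearMap.ext fun s => LinearMap.congr_fun hr s⟩
  obtain ⟨c, hc⟩ := h a
  have h_smul : a • r y = c • r y := hi <| by
    rw [map_smul, hc]
    exact ((i.restrictScalars F).map_smul c (r y)).symm
  exact (congrArg r (hc y)).trans ((r.map_smul c y).trans h_smul.symm)

theorem subsingleton_of_surjective_of_smul_eq_zero {e : A} (he : IsIdempotentElem e)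
    (π : ↥(Ideal.span {e} : Ideal A) →ₗ[A] S) (hπ : Function.Surjective π)
    (h : ∀ s : S, e • s = 0) : Subsingleton S := by
  refine subsingleton_of_forall_eq 0 fun s => ?_
  obtain ⟨⟨w, hw⟩, rfl⟩ := hπ s
  obtain ⟨a, rfl⟩ := Ideal.mem_span_singleton'.1 hw
  have h_smul : (⟨a * e, hw⟩ : Ideal.span {e}) =
      a • e • ⟨e, Ideal.mem_span_singleton_self e⟩ := Subtype.ext (by simp [he.eq])
  rw [h_smul, map_smul, map_smul, h, smul_zero]

theorem exists_retraction_of_mul_mem_idemSubalgebra {e : A} (he : IsIdempotentElem e)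
    (hE : ∀ a, a * e ∈ idemSubalgebra F A) (hS : Module.finrank F S = 1)
    (π : ↥(Ideal.span {e} : Ideal A) →ₗ[A] S) (hπ : Function.Surjective π)
    {i : S →ₗ[A] X} {p : X →ₗ[A] S} (hi : Function.Injective i)
    (h_exact : LinearMap.range i = LinearMap.ker p) :
    ∃ r : X →ₗ[A] S, r.comp i = LinearMap.id := by
  have h_idem (q : A) (hq : IsIdempotentElem q) :
      (∀ y : X, q • y = 0) ∨ ∀ y : X, q • y = y :=
    (forall_smul_eq_zero_or_forall_smul_eq_self hS hq).imp
      (fun h => smul_eq_zero_of_exact h_exact hq h h)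
      (fun h => smul_eq_self_of_exact h_exact hq h h)
  have heS : ∀ s : S, e • s = s := by
    refine (forall_smul_eq_zero_or_forall_smul_eq_self hS he).resolve_left fun h_zero => ?_
    have := subsingleton_of_surjective_of_smul_eq_zero he π hπ h_zero
    exact one_ne_zero (hS.symm.trans Module.finrank_zero_of_subsingleton)
  refine exists_retraction_of_forall_exists_smul_eq (F := F) (fun a => ?_) i hi
  obtain ⟨c, hc⟩ := exists_forall_smul_eq_of_mem_idemSubalgebra (X := X) h_idem (hE a)
  exact ⟨c, fun y => by rw [← hc, mul_smul, smul_eq_self_of_exact h_exact he heS heS]⟩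

end ScalarAction

section Equivalence

variable {F : Type*} {A : Type u} [Field F] [Ring A] [Algebra F A]

theorem IsZad.quotient_of_one_sub_mem {e : A} {N : Ideal A}
    (h : IsZad F A ↥(Ideal.span {e} : Ideal A)) (he : 1 - e ∈ N) : IsZad F A (A ⧸ N) :=
  h.of_surjective _ (surjective_mkQ_comp_subtype_span_singleton he)

theorem IsZad.quotient_of_radSubmodule {e : A} {N : Ideal A}
    (h : IsZad F A (↥(Ideal.span {e} : Ideal A) ⧸ radSubmodule A e)) (he : 1 - e ∈ N)
    (hN : ∀ r ∈ Ideal.jacobson (⊥ : Ideal A), r * e ∈ N) : IsZad F A (A ⧸ N) := by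
  have h_le : radSubmodule A e ≤ LinearMap.ker (N.mkQ ∘ₗ (Ideal.span {e} : Ideal A).subtype) := by
    rintro x ⟨r, hr, hrx : r * e = x⟩
    simpa [← hrx] using hN r hr
  refine h.of_surjective ((radSubmodule A e).liftQ _ h_le) ?_
  rw [← LinearMap.range_eq_top, Submodule.range_liftQ, LinearMap.range_eq_top]
  exact surjective_mkQ_comp_subtype_span_singleton he

theorem ker_le_ker_mul_ker_of_forall_quotient_splits {e : A}
    (h : ∀ (S : Type u) [AddCommGroup S] [Module F S] [Module A S] [IsScalarTower F A S]
      (π : ↥(Ideal.span {e} : Ideal A) →ₗ[A] S), Function.Surjective π →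
      Module.finrank F S = 1 →
      ∀ (X : Type u) [AddCommGroup X] [Module A X] (i : S →ₗ[A] X) (p : X →ₗ[A] S),
        Function.Injective i → Function.Surjective p → LinearMap.range i = LinearMap.ker p →
        ∃ r : X →ₗ[A] S, r.comp i = LinearMap.id)
    (φ : A →ₐ[F] F) (hφ : φ e = 1) : RingHom.ker φ ≤ RingHom.ker φ * RingHom.ker φ :=
  ker_le_ker_mul_ker_of_splits φ <| h (A ⧸ RingHom.ker φ) _
    (surjective_mkQ_comp_subtype_span_singleton (e := e) (by simp [RingHom.mem_ker, hφ]))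
    (finrank_quotient_ker φ)

end Equivalence

theorem stmt_12_general (F : Type*) (A : Type u) [Field F] [Ring A] [Algebra F A]
    [IsArtinianRing A] (e : A) (he : IsIdempotentElem e) :
    List.TFAE [
      IsZad F A ↥(Ideal.span {e} : Ideal A),
      IsZad F A (↥(Ideal.span {e} : Ideal A) ⧸ radSubmodule A e) ∧
        Submodule.map (LinearMap.toSpanSingleton A A e) (Ideal.jacobson (⊥ : Ideal A)) ≤
          Submodule.map (LinearMap.toSpanSingleton A A e) (commutatorIdeal A).asIdeal,
      IsZad F A (↥(Ideal.span {e} : Ideal A) ⧸ radSubmodule A e) ∧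
        (∀ (S : Type u) [AddCommGroup S] [Module F S] [Module A S] [IsScalarTower F A S]
          (π : ↥(Ideal.span {e} : Ideal A) →ₗ[A] S), Function.Surjective π →
          Module.finrank F S = 1 →
          ∀ (X : Type u) [AddCommGroup X] [Module A X] (i : S →ₗ[A] X) (p : X →ₗ[A] S),
            Function.Injective i → Function.Surjective p →
            LinearMap.range i = LinearMap.ker p →
            ∃ r : X →ₗ[A] S, r.comp i = LinearMap.id),
      (↑(Ideal.span {e} : Ideal A) : Set A) =
        {x : A | ∃ a ∈ idemSubalgebra F A, a * e = x} ] := by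
  rw [map_toSpanSingleton_le_iff he, coe_span_singleton_eq_iff he]
  tfae_have 1 → 4 := fun h => mul_mem_idemSubalgebra_of_isZad he
    (h.quotient_of_one_sub_mem (one_sub_mem_colon_singleton _ he))
  tfae_have 2 → 4 := fun ⟨h, h_rad⟩ => mul_mem_idemSubalgebra_of_isZad he <|
    h.quotient_of_radSubmodule (one_sub_mem_colon_singleton _ he) fun r hr => by
      simpa [Submodule.mem_colon_singleton, mul_assoc, he.eq] using h_rad r hr
  tfae_have 4 → 1 := fun h => isZad_span_singleton h he
  tfae_have 4 → 3 := fun h => by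
    refine ⟨(isZad_span_singleton h he).of_surjective _ (radSubmodule A e).mkQ_surjective, ?_⟩
    intro S _ _ _ _ π hπ hS X _ _ i p hi _ h_exact
    let _ : Module F X := Module.compHom X (algebraMap F A)
    have : IsScalarTower F A X := .of_algebraMap_smul fun _ _ => rfl
    exact exists_retraction_of_mul_mem_idemSubalgebra he h hS π hπ hi h_exact
  tfae_have 3 → 2 := fun ⟨h, h_splits⟩ => by
    refine ⟨h, mul_mem_commutatorIdeal_of_isZad (F := F) he ?_
      (ker_le_ker_mul_ker_of_forall_quotient_splits h_splits)⟩
    refine h.quotient_of_radSubmodule (one_sub_mem_colon_singleton _ he) fun r hr => ?_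
    simpa [Submodule.mem_colon_singleton, mul_assoc, he.eq] using
      Submodule.mem_sup_right ((Ideal.jacobson (⊥ : Ideal A)).mul_mem_right e hr)
  tfae_finish

/-- for a finite-dimensional algebra `A` and an idempotent `e`, with `E`
the subalgebra generated by idempotents, `I` the ideal generated by commutators of
idempotents with arbitrary elements and `R` the Jacobson radical, the following are
equivalent: (1) `Ae` is zad; (2) `Ae/Re` is zad and `Re ⊆ Ie`; (3) `Ae/Re` is zad and
every 1-dimensional quotient module `S` of `Ae` satisfies `Ext¹_A(S,S) = 0` (every short
exact sequence `0 → S → X → S → 0` splits); (4) `Ae = Ee`. -/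
theorem stmt_12 (F : Type*) (A : Type u) [Field F] [Ring A] [Algebra F A]
    [FiniteDimensional F A] (e : A) (he : IsIdempotentElem e) :
    List.TFAE [
      -- (1) Ae is zad
      IsZad F A ↥(Ideal.span {e} : Ideal A),
      -- (2) Ae/Re is zad and Re ⊆ Ie
      IsZad F A (↥(Ideal.span {e} : Ideal A) ⧸ radSubmodule A e) ∧
        Submodule.map (LinearMap.toSpanSingleton A A e) (Ideal.jacobson (⊥ : Ideal A)) ≤
          Submodule.map (LinearMap.toSpanSingleton A A e) (commutatorIdeal A).asIdeal,
      -- (3) Ae/Re is zad and every 1-dimensional quotient S of Ae has Ext¹(S,S) = 0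
      IsZad F A (↥(Ideal.span {e} : Ideal A) ⧸ radSubmodule A e) ∧
        (∀ (S : Type u) [AddCommGroup S] [Module F S] [Module A S] [IsScalarTower F A S]
          (π : ↥(Ideal.span {e} : Ideal A) →ₗ[A] S), Function.Surjective π →
          Module.finrank F S = 1 →
          ∀ (X : Type u) [AddCommGroup X] [Module A X] (i : S →ₗ[A] X) (p : X →ₗ[A] S),
            Function.Injective i → Function.Surjective p →
            LinearMap.range i = LinearMap.ker p →
            ∃ r : X →ₗ[A] S, r.comp i = LinearMap.id),
      -- (4) Ae = Ee
      (↑(Ideal.span {e} : Ideal A) : Set A) =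
        {x : A | ∃ a ∈ idemSubalgebra F A, a * e = x} ] := by
  have : IsArtinianRing A := isArtinian_of_tower F inferInstance
  exact stmt_12_general F A e he
end

section
/- Let A be a finite-dimensional unital associative F-algebra that is splitting over F, i.e., every finite-dimensional irreducible (simple) A-module S satisfies dim_F End_A(S) = 1. If A has finite global dimension (there exists n such that every A-module has projective dimension at most n), then A is zero product determined. -/
/-- A unital associative `F`-algebra `A` is *zero product determined* (zpd) if every
`F`-bilinear map `f : A × A → F` vanishing on pairs with zero product is of the form
`f(x, y) = Φ(xy)` for some linear `Φ`. -/
def IsZpd (F A : Type*) [Field F] [Ring A] [Algebra F A] : Prop :=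
  ∀ f : A →ₗ[F] A →ₗ[F] F,
    (∀ a b : A, a * b = 0 → f a b = 0) →
    ∃ Φ : A →ₗ[F] F, ∀ x y : A, f x y = Φ (x * y)
universe u

/-- `ProjDimLE A n M` means the left `A`-module `M` has projective dimension at most
`n`, i.e. it admits a projective resolution of length at most `n`. -/
def ProjDimLE (A : Type u) [Ring A] :
    ℕ → ∀ (M : Type u) [AddCommGroup M] [Module A M], Prop
  | 0, M, _, _ => Module.Projective A M
  | n + 1, M, _, _ =>
      ∃ (P : Type u) (_ : AddCommGroup P) (_ : Module A P) (f : P →ₗ[A] M),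
        Module.Projective A P ∧ Function.Surjective f ∧
          ProjDimLE A n ↥(LinearMap.ker f)

/-!
Bilinear maps killing zero products are balanced over idempotents, so it suffices that `A` is
generated by its idempotents; let `B` be the subalgebra they generate and `J` the radical. As `A`
splits, `A ⧸ J` is a product of matrix algebras over `F`, and lifting idempotents gives `A = B + J`.

Finite global dimension enters through a theorem of Lenzing: nilpotent elements lie in `[A, A]`.
Indeed the Hattori–Stallings trace extends from projective modules to all modules as an alternating
sum along a functorial resolution. The extension still satisfies `tr (ψ ∘ φ) = tr (φ ∘ ψ)`, hence
`tr φ = tr (φ|_{im φ})`, so that nilpotent endomorphisms have trace zero, among them right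
multiplication by a nilpotent `x`, whose trace is the class of `x` in `A / [A, A]`.

Hence `J ⊆ [A, A] = [B + J, B + J] ⊆ B + J²`, because `[B, A] ⊆ B`: for an idempotent `e`, the
commutator `[e, a]` is the difference of the idempotents `e + e a (1 - e)` and `e + (1 - e) a e`. So
`A = B + J²`, and `A = B` as `J` is nilpotent.
-/

section HattoriStallings

/-- The additive subgroup `[A, A]` generated by the commutators of a ring. -/
def commutatorAddSubgroup (A : Type*) [Ring A] : AddSubgroup A :=
  AddSubgroup.closure {x | ∃ a b : A, ⁅a, b⁆ = x}

/-- The universal trace `A → A / [A, A]`. -/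
def traceClass (A : Type*) [Ring A] : A →+ A ⧸ commutatorAddSubgroup A :=
  QuotientAddGroup.mk' _

theorem traceClass_eq_zero_iff {A : Type*} [Ring A] {x : A} :
    traceClass A x = 0 ↔ x ∈ commutatorAddSubgroup A :=
  QuotientAddGroup.eq_zero_iff x

theorem traceClass_mul_comm {A : Type*} [Ring A] (a b : A) :
    traceClass A (a * b) = traceClass A (b * a) := by
  rw [← sub_eq_zero, ← map_sub, traceClass_eq_zero_iff]
  exact AddSubgroup.subset_closure ⟨a, b, rfl⟩

variable {A P Q R : Type*} [Ring A] [AddCommGroup P] [Module A P] [AddCommGroup Q] [Module A Q]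
  [AddCommGroup R] [Module A R]

/-- Vectors `p` and linear forms `f` as in the dual basis lemma, which characterizes finitely
generated projective modules by their existence. -/
def IsDualBasis {ι : Type*} [Fintype ι] (p : ι → P) (f : ι → P →ₗ[A] A) : Prop :=
  ∀ x, ∑ i, f i x • p i = x

theorem exists_isDualBasis (A P : Type*) [Ring A] [AddCommGroup P] [Module A P]
    [Module.Finite A P] [Module.Projective A P] :
    ∃ (n : ℕ) (p : Fin n → P) (f : Fin n → P →ₗ[A] A), IsDualBasis p f := by
  obtain ⟨n, v, u, -, -, hvu⟩ := Module.Finite.exists_comp_eq_id_of_projective A P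
  refine ⟨n, fun i ↦ v (Pi.single i 1), fun i ↦ LinearMap.proj i ∘ₗ u, fun x ↦ ?_⟩
  calc ∑ i, u x i • v (Pi.single i 1) = v (u x) := by
        simp_rw [← map_smul, ← map_sum, ← Pi.single_smul', smul_eq_mul, mul_one,
          Finset.univ_sum_single]
    _ = x := LinearMap.congr_fun hvu x

theorem IsDualBasis.comp_equiv {ι κ : Type*} [Fintype ι] [Fintype κ] {p : ι → P}
    {f : ι → P →ₗ[A] A} (h : IsDualBasis p f) (e : κ ≃ ι) : IsDualBasis (p ∘ e) (f ∘ e) :=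
  fun x ↦ (e.sum_comp fun i ↦ f i x • p i).trans (h x)

theorem IsDualBasis.sum_traceClass_comp_comm {ι κ : Type*} [Fintype ι] [Fintype κ] {p : ι → P}
    {f : ι → P →ₗ[A] A} (hp : IsDualBasis p f) {q : κ → Q} {g : κ → Q →ₗ[A] A}
    (hq : IsDualBasis q g) (φ : P →ₗ[A] Q) (ψ : Q →ₗ[A] P) :
    ∑ i, traceClass A (f i (ψ (φ (p i)))) = ∑ j, traceClass A (g j (φ (ψ (q j)))) := by
  have expand_left (i : ι) : f i (ψ (φ (p i))) = ∑ j, g j (φ (p i)) * f i (ψ (q j)) := by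
    conv_lhs => rw [← hq (φ (p i))]
    simp only [map_sum, map_smul, smul_eq_mul]
  have expand_right (j : κ) : g j (φ (ψ (q j))) = ∑ i, f i (ψ (q j)) * g j (φ (p i)) := by
    conv_lhs => rw [← hp (ψ (q j))]
    simp only [map_sum, map_smul, smul_eq_mul]
  simp_rw [expand_left, expand_right, map_sum, traceClass_mul_comm (g _ _)]
  exact Finset.sum_comm

open Classical in
/-- The Hattori–Stallings trace of an endomorphism of a finitely generated projective module,
computed in a chosen dual basis. Modules without a dual basis get the junk value `0`. -/
noncomputable def hattoriTrace (φ : Module.End A P) : A ⧸ commutatorAddSubgroup A :=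
  if h : ∃ n, ∃ b : (Fin n → P) × (Fin n → P →ₗ[A] A), IsDualBasis b.1 b.2 then
    ∑ i, traceClass A (h.choose_spec.choose.2 i (φ (h.choose_spec.choose.1 i)))
  else 0

theorem IsDualBasis.hattoriTrace_eq {ι : Type*} [Fintype ι] {p : ι → P} {f : ι → P →ₗ[A] A}
    (hp : IsDualBasis p f) (φ : Module.End A P) :
    hattoriTrace φ = ∑ i, traceClass A (f i (φ (p i))) := by
  have h : ∃ n, ∃ b : (Fin n → P) × (Fin n → P →ₗ[A] A), IsDualBasis b.1 b.2 :=
    ⟨_, (_, _), hp.comp_equiv (Fintype.equivFin ι).symm⟩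
  rw [hattoriTrace, dif_pos h]
  exact h.choose_spec.choose_spec.sum_traceClass_comp_comm hp φ LinearMap.id

theorem hattoriTrace_zero : hattoriTrace (0 : Module.End A P) = 0 := by
  simp [hattoriTrace]

theorem hattoriTrace_add (φ ψ : Module.End A P) :
    hattoriTrace (φ + ψ) = hattoriTrace φ + hattoriTrace ψ := by
  unfold hattoriTrace
  split_ifs <;> simp [Finset.sum_add_distrib]

theorem hattoriTrace_moduleEndSelf (x : A) :
    hattoriTrace (RingEquiv.moduleEndSelf A (MulOpposite.op x)) = traceClass A x := by
  have h : IsDualBasis (fun _ : Unit ↦ (1 : A)) fun _ ↦ LinearMap.id := fun x ↦ by simp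
  simp [h.hattoriTrace_eq]

theorem exists_splitting_of_exact [Module.Projective A R] {i : P →ₗ[A] Q} {q : Q →ₗ[A] R}
    (hi : Function.Injective i) (hq : Function.Surjective q) (hiq : Function.Exact i q) :
    ∃ (r : Q →ₗ[A] P) (s : R →ₗ[A] Q),
      r ∘ₗ i = .id ∧ q ∘ₗ s = .id ∧ i ∘ₗ r + s ∘ₗ q = .id := by
  obtain ⟨e, rfl, rfl⟩ := ((hiq.split_tfae hi hq).out 0 2).1
    (Module.projective_lifting_property q .id hq)
  refine ⟨.fst A P R ∘ₗ e, e.symm ∘ₗ .inr A P R, ?_, ?_, ?_⟩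
  · ext; simp
  · ext; simp
  · ext x
    exact e.injective (by simp)

variable [Module.Finite A P] [Module.Projective A P] [Module.Finite A Q] [Module.Projective A Q]

theorem hattoriTrace_comp_comm (φ : P →ₗ[A] Q) (ψ : Q →ₗ[A] P) :
    hattoriTrace (ψ ∘ₗ φ) = hattoriTrace (φ ∘ₗ ψ) := by
  obtain ⟨_, p, f, hp⟩ := exists_isDualBasis A P
  obtain ⟨_, q, g, hq⟩ := exists_isDualBasis A Q
  rw [hp.hattoriTrace_eq, hq.hattoriTrace_eq]
  exact hp.sum_traceClass_comp_comm hq φ ψ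

theorem hattoriTrace_eq_add_of_exact [Module.Finite A R] [Module.Projective A R]
    {i : P →ₗ[A] Q} {q : Q →ₗ[A] R} (hi : Function.Injective i) (hq : Function.Surjective q)
    (hiq : Function.Exact i q) {α : Module.End A P} {β : Module.End A Q} {γ : Module.End A R}
    (hα : β ∘ₗ i = i ∘ₗ α) (hγ : q ∘ₗ β = γ ∘ₗ q) :
    hattoriTrace β = hattoriTrace α + hattoriTrace γ := by
  obtain ⟨r, s, hri, hqs, hid⟩ := exists_splitting_of_exact hi hq hiq
  calc hattoriTrace β = hattoriTrace (β ∘ₗ (i ∘ₗ r + s ∘ₗ q)) := by rw [hid, LinearMap.comp_id]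
    _ = hattoriTrace ((β ∘ₗ i) ∘ₗ r) + hattoriTrace ((β ∘ₗ s) ∘ₗ q) := by
        rw [LinearMap.comp_add, hattoriTrace_add, LinearMap.comp_assoc, LinearMap.comp_assoc]
    _ = hattoriTrace (r ∘ₗ β ∘ₗ i) + hattoriTrace ((q ∘ₗ β) ∘ₗ s) := by
        rw [hattoriTrace_comp_comm r, hattoriTrace_comp_comm q, LinearMap.comp_assoc s]
    _ = hattoriTrace ((r ∘ₗ i) ∘ₗ α) + hattoriTrace (γ ∘ₗ q ∘ₗ s) := by
        rw [hα, hγ, LinearMap.comp_assoc, LinearMap.comp_assoc]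
    _ = hattoriTrace α + hattoriTrace γ := by
        rw [hri, hqs, LinearMap.id_comp, LinearMap.comp_id]

end HattoriStallings

section ProjectiveDimension

open CategoryTheory

variable {A : Type u} [Ring A] {M : Type u} [AddCommGroup M] [Module A M]

theorem hasProjectiveDimensionLE_zero_iff :
    HasProjectiveDimensionLE (ModuleCat.of A M) 0 ↔ Module.Projective A M :=
  projective_iff_hasProjectiveDimensionLT_one.symm.trans (IsProjective.iff_projective M).symm

theorem hasProjectiveDimensionLE_succ_iff_ker {P : Type u} [AddCommGroup P] [Module A P]
    [Module.Projective A P] {f : P →ₗ[A] M} (hf : Function.Surjective f) (n : ℕ) :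
    HasProjectiveDimensionLE (ModuleCat.of A M) (n + 1) ↔
      HasProjectiveDimensionLE (ModuleCat.of A (LinearMap.ker f)) n :=
  (LinearMap.shortExact_shortComplexKer hf).hasProjectiveDimensionLT_X₃_iff n
    ((IsProjective.iff_projective P).1 inferInstance)

theorem ProjDimLE.hasProjectiveDimensionLE {n : ℕ} (h : ProjDimLE A n M) :
    HasProjectiveDimensionLE (ModuleCat.of A M) n := by
  induction n generalizing M with
  | zero => exact hasProjectiveDimensionLE_zero_iff.2 h
  | succ n ih =>
    obtain ⟨P, _, _, f, _, hf, hker⟩ := h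
    exact (hasProjectiveDimensionLE_succ_iff_ker hf n).2 (ih hker)

end ProjectiveDimension

section Syzygy

open TensorProduct

variable (R : Type*) {A : Type*} [CommRing R] [Ring A] [Algebra R A] {M N L : Type*}
  [AddCommGroup M] [Module R M] [Module A M] [IsScalarTower R A M]
  [AddCommGroup N] [Module R N] [Module A N] [IsScalarTower R A N]
  [AddCommGroup L] [Module R L] [Module A L] [IsScalarTower R A L]

variable (A M) in
/-- The action map `A ⊗[R] M → M`, a functorial surjection onto `M` from a module that is free if
`R` is a field. -/
noncomputable def actionMap : A ⊗[R] M →ₗ[A] M :=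
  AlgebraTensorModule.lift (LinearMap.toSpanSingleton A (Module.End R M) 1)

@[simp]
theorem actionMap_tmul (a : A) (m : M) : actionMap R A M (a ⊗ₜ m) = a • m :=
  rfl

theorem actionMap_surjective : Function.Surjective (actionMap R A M) :=
  fun m ↦ ⟨1 ⊗ₜ m, by simp⟩

/-- The map `A ⊗[R] M → A ⊗[R] N` induced by an `A`-linear map `M → N`. -/
noncomputable def coverMap (φ : M →ₗ[A] N) : A ⊗[R] M →ₗ[A] A ⊗[R] N :=
  (φ.restrictScalars R).baseChange A

theorem coverMap_zero : coverMap R (0 : M →ₗ[A] N) = 0 := by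
  simp [coverMap]

theorem coverMap_comp (ψ : N →ₗ[A] L) (φ : M →ₗ[A] N) :
    coverMap R (ψ ∘ₗ φ) = coverMap R ψ ∘ₗ coverMap R φ := by
  ext m
  simp [coverMap]

theorem actionMap_comp_coverMap (φ : M →ₗ[A] N) :
    actionMap R A N ∘ₗ coverMap R φ = φ ∘ₗ actionMap R A M := by
  ext m
  simp [coverMap]

variable (A M) in
/-- The functorial first syzygy module of `M`. -/
noncomputable abbrev syzygy : Submodule A (A ⊗[R] M) :=
  LinearMap.ker (actionMap R A M)

/-- The map between first syzygy modules induced by an `A`-linear map. -/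
noncomputable def syzygyMap (φ : M →ₗ[A] N) : syzygy R A M →ₗ[A] syzygy R A N :=
  (coverMap R φ).restrict fun x (hx : actionMap R A M x = 0) ↦
    (LinearMap.congr_fun (actionMap_comp_coverMap R φ) x).trans (by simp [hx])

theorem syzygyMap_zero : syzygyMap R (0 : M →ₗ[A] N) = 0 := by
  ext x
  exact LinearMap.congr_fun (coverMap_zero R) x.1

theorem syzygyMap_comp (ψ : N →ₗ[A] L) (φ : M →ₗ[A] N) :
    syzygyMap R (ψ ∘ₗ φ) = syzygyMap R ψ ∘ₗ syzygyMap R φ := by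
  ext x
  exact LinearMap.congr_fun (coverMap_comp R ψ φ) x.1

end Syzygy

theorem finiteDimensional_of_submodule (F : Type*) {A M : Type*} [Field F] [Ring A] [Algebra F A]
    [AddCommGroup M] [Module F M] [Module A M] [IsScalarTower F A M] [FiniteDimensional F M]
    (S : Submodule A M) : FiniteDimensional F S :=
  FiniteDimensional.finiteDimensional_submodule (S.restrictScalars F)

section EulerTrace

open CategoryTheory

variable (F : Type*) {A : Type u} [Field F] [Ring A] [Algebra F A] {M N : Type u}
  [AddCommGroup M] [Module F M] [Module A M] [IsScalarTower F A M]
  [AddCommGroup N] [Module F N] [Module A N] [IsScalarTower F A N]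

/-- The alternating sum of the Hattori–Stallings traces of the endomorphisms that `φ` induces on
the functorial resolution of `M` of length `n`, whose last term is the `n`-th syzygy. It is
meaningful if `M` is finite-dimensional of projective dimension at most `n`. -/
noncomputable def eulerTrace (n : ℕ) {M : Type u} [AddCommGroup M] [Module F M] [Module A M]
    [IsScalarTower F A M] (φ : Module.End A M) : A ⧸ commutatorAddSubgroup A :=
  match n with
  | 0 => hattoriTrace φ
  | n + 1 => hattoriTrace (coverMap F φ) - eulerTrace n (M := syzygy F A M) (syzygyMap F φ)

theorem eulerTrace_zero (n : ℕ) : eulerTrace F n (0 : Module.End A M) = 0 := by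
  induction n generalizing M with
  | zero => exact hattoriTrace_zero
  | succ n ih => rw [eulerTrace, coverMap_zero, syzygyMap_zero, hattoriTrace_zero, ih, sub_zero]

variable [FiniteDimensional F A] [FiniteDimensional F M]

theorem eulerTrace_comp_comm [FiniteDimensional F N] {n : ℕ}
    (hM : HasProjectiveDimensionLE (ModuleCat.of A M) n)
    (hN : HasProjectiveDimensionLE (ModuleCat.of A N) n) (φ : M →ₗ[A] N) (ψ : N →ₗ[A] M) :
    eulerTrace F n (ψ ∘ₗ φ) = eulerTrace F n (φ ∘ₗ ψ) := by
  induction n generalizing M N with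
  | zero =>
    have := hasProjectiveDimensionLE_zero_iff.1 hM
    have := hasProjectiveDimensionLE_zero_iff.1 hN
    have := Module.Finite.of_restrictScalars_finite F A M
    have := Module.Finite.of_restrictScalars_finite F A N
    exact hattoriTrace_comp_comm φ ψ
  | succ n ih =>
    have := finiteDimensional_of_submodule F (syzygy F A M)
    have := finiteDimensional_of_submodule F (syzygy F A N)
    have hΩM := (hasProjectiveDimensionLE_succ_iff_ker (actionMap_surjective F) n).1 hM
    have hΩN := (hasProjectiveDimensionLE_succ_iff_ker (actionMap_surjective F) n).1 hN
    rw [eulerTrace, eulerTrace, coverMap_comp, coverMap_comp, syzygyMap_comp, syzygyMap_comp,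
      hattoriTrace_comp_comm, ih hΩM hΩN]

theorem eulerTrace_eq_hattoriTrace [Module.Projective A M] (n : ℕ) (φ : Module.End A M) :
    eulerTrace F n φ = hattoriTrace φ := by
  induction n generalizing M with
  | zero => rfl
  | succ n ih =>
    have := finiteDimensional_of_submodule F (syzygy F A M)
    have := Module.Finite.of_restrictScalars_finite F A M
    have := Module.Finite.of_restrictScalars_finite F A (syzygy F A M)
    have := hasProjectiveDimensionLE_zero_iff.2 ‹Module.Projective A M›
    have : Module.Projective A (syzygy F A M) := hasProjectiveDimensionLE_zero_iff.1 <|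
      (hasProjectiveDimensionLE_succ_iff_ker (actionMap_surjective F) 0).1
        (hasProjectiveDimensionLT_of_ge _ 1 2 one_le_two)
    rw [eulerTrace, ih, sub_eq_iff_eq_add']
    exact hattoriTrace_eq_add_of_exact (Submodule.subtype_injective _) (actionMap_surjective F)
      (LinearMap.exact_subtype_ker_map _) rfl (actionMap_comp_coverMap F φ)

theorem eulerTrace_eq_zero_of_isNilpotent {n : ℕ}
    (hn : ∀ (M : Type u) [AddCommGroup M] [Module A M] [Module.Finite A M],
      HasProjectiveDimensionLE (ModuleCat.of A M) n)
    {φ : Module.End A M} (hφ : IsNilpotent φ) : eulerTrace F n φ = 0 := by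
  obtain ⟨k, hk⟩ := hφ
  induction k generalizing M with
  | zero =>
    obtain rfl : φ = 0 := by rw [← mul_one φ, ← pow_zero φ, hk, mul_zero]
    exact eulerTrace_zero F n
  | succ k ih =>
    let ι := (LinearMap.range φ).subtype
    let ρ := φ.rangeRestrict
    have := finiteDimensional_of_submodule F (LinearMap.range φ)
    have := Module.Finite.of_restrictScalars_finite F A M
    have := Module.Finite.of_restrictScalars_finite F A (LinearMap.range φ)
    have hpow : (ρ ∘ₗ ι) ^ k = 0 := by
      have intertwine := Module.End.commute_pow_left_of_commute
        (show φ ∘ₗ ι = ι ∘ₗ ρ ∘ₗ ι from rfl) k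
      ext ⟨_, x, rfl⟩
      rw [pow_succ] at hk
      exact (LinearMap.congr_fun intertwine.symm _).trans (LinearMap.congr_fun hk x)
    exact (eulerTrace_comp_comm F (hn M) (hn _) ρ ι).trans (ih hpow)

end EulerTrace

/-- Lenzing's theorem for finite-dimensional algebras. -/
theorem mem_commutatorAddSubgroup_of_isNilpotent (F : Type*) {A : Type u} [Field F] [Ring A]
    [Algebra F A] [FiniteDimensional F A] {n : ℕ}
    (hn : ∀ (M : Type u) [AddCommGroup M] [Module A M] [Module.Finite A M],
      CategoryTheory.HasProjectiveDimensionLE (ModuleCat.of A M) n)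
    {x : A} (hx : IsNilpotent x) : x ∈ commutatorAddSubgroup A := by
  have hφ : IsNilpotent (RingEquiv.moduleEndSelf A (MulOpposite.op x)) := by
    obtain ⟨k, hk⟩ := hx
    exact ⟨k, by rw [← map_pow, ← MulOpposite.op_pow, hk, MulOpposite.op_zero, map_zero]⟩
  rw [← traceClass_eq_zero_iff, ← hattoriTrace_moduleEndSelf,
    ← eulerTrace_eq_hattoriTrace F n, eulerTrace_eq_zero_of_isNilpotent F hn hφ]

section Idempotents

variable (R : Type*) (A : Type*) [CommRing R] [Ring A] [Algebra R A]

/-- The subalgebra generated by the idempotents of `A`. -/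
def idempotentSubalgebra : Subalgebra R A :=
  Algebra.adjoin R {e | IsIdempotentElem e}

variable {R A}

theorem mem_idempotentSubalgebra_of_isIdempotentElem {e : A} (he : IsIdempotentElem e) :
    e ∈ idempotentSubalgebra R A :=
  Algebra.subset_adjoin he

theorem lie_mem_idempotentSubalgebra {b : A} (hb : b ∈ idempotentSubalgebra R A) (a : A) :
    ⁅b, a⁆ ∈ idempotentSubalgebra R A := by
  induction hb using Algebra.adjoin_induction generalizing a with
  | mem e he =>
    have hee (x : A) : e * (e * x) = e * x := by rw [← mul_assoc, he.eq]
    have upper : IsIdempotentElem (e + e * a * (1 - e)) := by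
      simp only [IsIdempotentElem, mul_add, add_mul, mul_sub, sub_mul, mul_one, mul_assoc, hee,
        he.eq]
      abel
    have lower : IsIdempotentElem (e + (1 - e) * a * e) := by
      simp only [IsIdempotentElem, mul_add, add_mul, mul_sub, sub_mul, one_mul, mul_assoc, hee,
        he.eq]
      abel
    have hlie : ⁅e, a⁆ = (e + e * a * (1 - e)) - (e + (1 - e) * a * e) := by
      rw [Ring.lie_def]
      noncomm_ring
    rw [hlie]
    exact sub_mem (mem_idempotentSubalgebra_of_isIdempotentElem upper)
      (mem_idempotentSubalgebra_of_isIdempotentElem lower)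
  | algebraMap r => simp [Ring.lie_def, Algebra.commutes]
  | add b c _ _ hb hc =>
    have hlie : ⁅b + c, a⁆ = ⁅b, a⁆ + ⁅c, a⁆ := by
      simp only [Ring.lie_def]
      noncomm_ring
    rw [hlie]
    exact add_mem (hb a) (hc a)
  | mul b c _ _ hb hc =>
    have hlie : ⁅b * c, a⁆ = ⁅b, c * a⁆ + ⁅c, a * b⁆ := by
      simp only [Ring.lie_def]
      noncomm_ring
    rw [hlie]
    exact add_mem (hb _) (hc _)

theorem idempotentSubalgebra_eq_top_of_surjective {B : Type*} [Ring B] [Algebra R B]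
    {φ : A →ₐ[R] B} (hφ : Function.Surjective φ) (h : idempotentSubalgebra R A = ⊤) :
    idempotentSubalgebra R B = ⊤ := by
  rw [eq_top_iff, ← (AlgHom.range_eq_top φ).2 hφ, ← Algebra.map_top, ← h, idempotentSubalgebra,
    AlgHom.map_adjoin]
  refine Algebra.adjoin_mono ?_
  rintro _ ⟨e, he, rfl⟩
  exact he.map φ

theorem idempotentSubalgebra_le_map_of_ker_isNilpotent {B : Type*} [Ring B] [Algebra R B]
    {π : A →ₐ[R] B} (hπ : Function.Surjective π) (hker : ∀ x ∈ RingHom.ker π, IsNilpotent x) :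
    idempotentSubalgebra R B ≤ (idempotentSubalgebra R A).map π := by
  rw [idempotentSubalgebra, idempotentSubalgebra, AlgHom.map_adjoin]
  exact Algebra.adjoin_mono fun e he ↦
    exists_isIdempotentElem_eq_of_ker_isNilpotent (π : A →+* B) hker e (hπ e) he

theorem idempotentSubalgebra_pi_eq_top {ι : Type*} [Finite ι] {B : ι → Type*} [∀ i, Ring (B i)]
    [∀ i, Algebra R (B i)] (h : ∀ i, idempotentSubalgebra R (B i) = ⊤) :
    idempotentSubalgebra R (Π i, B i) = ⊤ := by
  classical
  have := Fintype.ofFinite ι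
  have idempotent_single {i : ι} {e : B i} (he : IsIdempotentElem e) :
      Pi.single i e ∈ idempotentSubalgebra R (Π i, B i) :=
    mem_idempotentSubalgebra_of_isIdempotentElem (by
      rw [IsIdempotentElem, ← Pi.single_mul, he.eq])
  have single_mem (i : ι) (x : B i) : Pi.single i x ∈ idempotentSubalgebra R (Π i, B i) := by
    have hx : x ∈ idempotentSubalgebra R (B i) := h i ▸ Algebra.mem_top
    induction hx using Algebra.adjoin_induction with
    | mem e he => exact idempotent_single he
    | algebraMap r =>
      rw [Algebra.algebraMap_eq_smul_one, Pi.single_smul]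
      exact Subalgebra.smul_mem _ (idempotent_single .one) r
    | add x y _ _ hx hy => rw [Pi.single_add]; exact add_mem hx hy
    | mul x y _ _ hx hy => rw [Pi.single_mul]; exact mul_mem hx hy
  refine eq_top_iff.2 fun x _ ↦ ?_
  rw [← Finset.univ_sum_single x]
  exact sum_mem fun i _ ↦ single_mem i (x i)

theorem idempotentSubalgebra_matrix_eq_top {n D : Type*} [Fintype n] [DecidableEq n] [Ring D]
    [Algebra R D] (hD : Function.Surjective (algebraMap R D)) :
    idempotentSubalgebra R (Matrix n n D) = ⊤ := by
  have diag (i : n) : IsIdempotentElem (Matrix.single i i (1 : D)) := by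
    simp [IsIdempotentElem]
  have unit_mem (i j : n) : Matrix.single i j 1 ∈ idempotentSubalgebra R (Matrix n n D) := by
    obtain rfl | hij := eq_or_ne i j
    · exact mem_idempotentSubalgebra_of_isIdempotentElem (diag i)
    · have hsum : IsIdempotentElem (Matrix.single i i (1 : D) + Matrix.single i j 1) := by
        simp [IsIdempotentElem, mul_add, add_mul, hij.symm]
      simpa using sub_mem (mem_idempotentSubalgebra_of_isIdempotentElem (R := R) hsum)
        (mem_idempotentSubalgebra_of_isIdempotentElem (diag i))
  refine eq_top_iff.2 fun x _ ↦ ?_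
  rw [Matrix.matrix_eq_sum_single x]
  refine sum_mem fun i _ ↦ sum_mem fun j _ ↦ ?_
  obtain ⟨c, hc⟩ := hD (x i j)
  rw [← hc, Algebra.algebraMap_eq_smul_one, ← Matrix.smul_single]
  exact Subalgebra.smul_mem _ (unit_mem i j) c

end Idempotents

section ZeroProducts

variable {F A : Type*} [Field F] [Ring A] [Algebra F A]

theorem map_mul_isIdempotentElem_of_zero_product {f : A →ₗ[F] A →ₗ[F] F}
    (hf : ∀ a b : A, a * b = 0 → f a b = 0) {e : A} (he : IsIdempotentElem e) (x y : A) :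
    f (x * e) y = f x (e * y) := by
  have left : f (x * e) (y - e * y) = 0 := hf _ _ (by
    rw [mul_sub, mul_assoc, mul_assoc, ← mul_assoc e e, he.eq, sub_self])
  have right : f (x - x * e) (e * y) = 0 := hf _ _ (by
    rw [sub_mul, mul_assoc, ← mul_assoc e e, he.eq, sub_self])
  rw [map_sub, sub_eq_zero] at left
  rw [map_sub, LinearMap.sub_apply, sub_eq_zero] at right
  rw [left, right]

theorem isZpd_of_idempotentSubalgebra_eq_top (h : idempotentSubalgebra F A = ⊤) : IsZpd F A := by
  intro f hf
  have balanced (a : A) : ∀ x y, f (x * a) y = f x (a * y) := by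
    have ha : a ∈ idempotentSubalgebra F A := h ▸ Algebra.mem_top
    induction ha using Algebra.adjoin_induction with
    | mem e he => exact map_mul_isIdempotentElem_of_zero_product hf he
    | algebraMap r => intro x y; simp [Algebra.algebraMap_eq_smul_one]
    | add a b _ _ ha hb => intro x y; simp [mul_add, add_mul, ha, hb]
    | mul a b _ _ ha hb => intro x y; rw [← mul_assoc, hb, ha, mul_assoc]
  exact ⟨f 1, fun x y ↦ by simpa using balanced x 1 y⟩

end ZeroProducts

section NilpotentIdeal

theorem isNilpotent_of_mem_of_isNilpotent {A : Type*} [Ring A] {J : Ideal A} (hJ : IsNilpotent J)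
    {x : A} (hx : x ∈ J) : IsNilpotent x := by
  obtain ⟨k, hk⟩ := hJ
  exact ⟨k, by simpa [hk] using Ideal.pow_mem_pow hx k⟩

variable {R A : Type*} [CommRing R] [Ring A] [Algebra R A] {B : Subalgebra R A} {J : Ideal A}

open Subalgebra (toSubmodule)

theorem commutatorAddSubgroup_le_sup_sq (hlie : ∀ b ∈ B, ∀ a, ⁅b, a⁆ ∈ B)
    (hBJ : toSubmodule B ⊔ J.restrictScalars R = ⊤) :
    commutatorAddSubgroup A ≤
      (toSubmodule B ⊔ (J ^ 2).restrictScalars R).toAddSubgroup := by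
  refine (AddSubgroup.closure_le _).2 ?_
  rintro _ ⟨a, a', rfl⟩
  obtain ⟨b, hb, x, hx, rfl⟩ := Submodule.mem_sup.1 (hBJ.ge (Submodule.mem_top (x := a)))
  obtain ⟨b', hb', x', hx', rfl⟩ := Submodule.mem_sup.1 (hBJ.ge (Submodule.mem_top (x := a')))
  have hxx' : ⁅x, x'⁆ ∈ J ^ 2 := by
    rw [Submodule.pow_succ, Submodule.pow_one]
    exact sub_mem (Ideal.mul_mem_mul hx hx') (Ideal.mul_mem_mul hx' hx)
  have expand : ⁅b, b' + x'⁆ - ⁅b', x⁆ + ⁅x, x'⁆ = ⁅b + x, b' + x'⁆ := by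
    simp only [Ring.lie_def]
    noncomm_ring
  exact Submodule.mem_sup.2
    ⟨_, sub_mem (hlie b hb _) (hlie b' hb' x), _, hxx', expand⟩

theorem subalgebra_eq_top_of_sup_sq_eq_top (hJ : IsNilpotent J)
    (hBJ : toSubmodule B ⊔ (J ^ 2).restrictScalars R = ⊤) : B = ⊤ := by
  have sup_pow_eq_top (m : ℕ) : toSubmodule B ⊔ (J ^ (m + 1)).restrictScalars R = ⊤ := by
    induction m with
    | zero =>
      exact top_unique (hBJ.ge.trans (sup_le_sup_left (Ideal.pow_le_pow_right one_le_two) _))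
    | succ m ih =>
      have decompose (a : A) : ∃ b ∈ B, ∃ x ∈ J ^ (m + 1), b + x = a :=
        Submodule.mem_sup.1 (ih.ge (Submodule.mem_top (x := a)))
      refine top_unique (hBJ.ge.trans (sup_le le_sup_left fun y hy ↦ ?_))
      rw [Submodule.restrictScalars_mem, Submodule.pow_succ, Submodule.pow_one] at hy
      induction hy using Submodule.mul_induction_on' with
      | mem_mul_mem a ha a' ha' =>
        obtain ⟨b, hb, x, hx, rfl⟩ := decompose a
        obtain ⟨b', hb', x', hx', rfl⟩ := decompose a'
        have hbJ : b ∈ J := by simpa using sub_mem ha (Ideal.pow_le_self m.succ_ne_zero hx)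
        have hbx' : b * x' ∈ J ^ (m + 2) := by
          rw [Submodule.pow_succ' J m.succ_ne_zero]
          exact Ideal.mul_mem_mul hbJ hx'
        have hxa' : x * (b' + x') ∈ J ^ (m + 2) := by
          rw [Submodule.pow_succ]
          exact Ideal.mul_mem_mul hx ha'
        exact Submodule.mem_sup.2 ⟨b * b', B.mul_mem hb hb', _, add_mem hbx' hxa', by noncomm_ring⟩
      | add y _ z _ hy hz => exact add_mem hy hz
  obtain ⟨k, hk⟩ := hJ
  refine Algebra.toSubmodule_eq_top.1 (top_unique ((sup_pow_eq_top k).ge.trans ?_))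
  rw [Submodule.pow_succ, hk, zero_mul]
  simp

end NilpotentIdeal

section Splitting

variable {F : Type*} {A : Type u} [Field F] [Ring A] [Algebra F A]

variable (F A) in
/-- The algebra `A` is splitting over `F`: its finite-dimensional simple modules have only scalar
endomorphisms. -/
def IsSplittingAlgebra : Prop :=
  ∀ (S : Type u) [AddCommGroup S] [Module F S] [Module A S] [IsScalarTower F A S],
    IsSimpleModule A S → FiniteDimensional F S → Module.finrank F (S →ₗ[A] S) = 1

theorem IsSplittingAlgebra.of_surjective (hA : IsSplittingAlgebra F A) {B : Type u} [Ring B]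
    [Algebra F B] {π : A →ₐ[F] B} (hπ : Function.Surjective π) : IsSplittingAlgebra F B := by
  intro S _ _ _ _ hS _
  let _ : Module A S := Module.compHom S (π : A →+* B)
  have hsmul (a : A) (s : S) : a • s = π a • s := rfl
  have : IsScalarTower F A S := ⟨fun c a s ↦ by simp [hsmul]⟩
  have : RingHomSurjective (π : A →+* B) := ⟨hπ⟩
  let σ : S →ₛₗ[(π : A →+* B)] S :=
    { toFun := id, map_add' _ _ := rfl, map_smul' _ _ := rfl }
  have hSA : IsSimpleModule A S :=
    (LinearMap.isSimpleModule_iff_of_bijective σ Function.bijective_id).2 hS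
  let endEquiv : (S →ₗ[B] S) ≃ₗ[F] (S →ₗ[A] S) :=
    { toFun φ := { toFun := φ, map_add' := map_add φ, map_smul' a := map_smul φ (π a) }
      invFun φ :=
        { toFun := φ, map_add' := map_add φ, map_smul' := hπ.forall.2 (map_smul φ) }
      map_add' _ _ := rfl
      map_smul' _ _ := rfl }
  exact endEquiv.finrank_eq.trans (hA S hSA inferInstance)

variable [FiniteDimensional F A]

theorem IsSplittingAlgebra.idempotentSubalgebra_eq_top_of_isSemisimpleRing [IsSemisimpleRing A]
    (hA : IsSplittingAlgebra F A) : idempotentSubalgebra F A = ⊤ := by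
  obtain ⟨n, S, d, hS, -, ⟨e⟩⟩ := IsSemisimpleRing.exists_algEquiv_pi_matrix_end_mulOpposite F A
  have scalar (i : Fin n) : Function.Surjective (algebraMap F (Module.End A (S i))ᵐᵒᵖ) := by
    have hrank : Module.finrank F (Module.End A (S i)) = 1 :=
      hA (S i) (hS i) (finiteDimensional_of_submodule F (S i))
    exact MulOpposite.op_surjective.comp
      (Algebra.finrank_eq_one_iff_bijective_algebraMap.1 hrank).surjective
  exact idempotentSubalgebra_eq_top_of_surjective (φ := e.symm.toAlgHom) e.symm.surjective
    (idempotentSubalgebra_pi_eq_top fun i ↦ idempotentSubalgebra_matrix_eq_top (scalar i))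

theorem IsSplittingAlgebra.idempotentSubalgebra_sup_jacobson_eq_top
    (hA : IsSplittingAlgebra F A) :
    Subalgebra.toSubmodule (idempotentSubalgebra F A) ⊔ (Ring.jacobson A).restrictScalars F =
      ⊤ := by
  have : IsArtinianRing A := isArtinian_of_tower F inferInstance
  let π := Ideal.Quotient.mkₐ F (Ring.jacobson A)
  have hπ : Function.Surjective π := Ideal.Quotient.mkₐ_surjective F _
  have : FiniteDimensional F (A ⧸ Ring.jacobson A) := .of_surjective π.toLinearMap hπ
  have hker : ∀ x ∈ RingHom.ker π, IsNilpotent x := fun x hx ↦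
    isNilpotent_of_mem_of_isNilpotent IsSemiprimaryRing.isNilpotent
      (Ideal.Quotient.eq_zero_iff_mem.1 hx)
  refine eq_top_iff.2 fun a _ ↦ ?_
  obtain ⟨b, hb, hab⟩ := idempotentSubalgebra_le_map_of_ker_isNilpotent hπ hker
    ((hA.of_surjective hπ).idempotentSubalgebra_eq_top_of_isSemisimpleRing ▸ Algebra.mem_top :
      π a ∈ _)
  exact Submodule.mem_sup.2 ⟨b, hb, a - b, Ideal.Quotient.eq.1 hab.symm, add_sub_cancel b a⟩

end Splitting

theorem IsSplittingAlgebra.idempotentSubalgebra_eq_top {F : Type*} {A : Type u} [Field F] [Ring A]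
    [Algebra F A] [FiniteDimensional F A] (hA : IsSplittingAlgebra F A)
    (hJ : ∀ x ∈ Ring.jacobson A, x ∈ commutatorAddSubgroup A) :
    idempotentSubalgebra F A = ⊤ := by
  have : IsArtinianRing A := isArtinian_of_tower F inferInstance
  have hBJ := hA.idempotentSubalgebra_sup_jacobson_eq_top
  have hle := commutatorAddSubgroup_le_sup_sq (fun _ ↦ lie_mem_idempotentSubalgebra) hBJ
  exact subalgebra_eq_top_of_sup_sq_eq_top IsSemiprimaryRing.isNilpotent
    (top_unique (hBJ.ge.trans (sup_le le_sup_left fun x hx ↦ hle (hJ x hx))))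

/-- a finite-dimensional splitting algebra of finite global dimension is
zero product determined. -/
theorem stmt_18 (F : Type*) (A : Type u) [Field F] [Ring A] [Algebra F A]
    [FiniteDimensional F A]
    (hsplit : ∀ (S : Type u) [AddCommGroup S] [Module F S] [Module A S]
      [IsScalarTower F A S],
      IsSimpleModule A S → FiniteDimensional F S → Module.finrank F (S →ₗ[A] S) = 1)
    (hgldim : ∃ n : ℕ, ∀ (M : Type u) [AddCommGroup M] [Module A M], ProjDimLE A n M) :
    IsZpd F A := by
  obtain ⟨n, hn⟩ := hgldim
  have : IsArtinianRing A := isArtinian_of_tower F inferInstance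
  have radical_le (x : A) (hx : x ∈ Ring.jacobson A) : x ∈ commutatorAddSubgroup A :=
    mem_commutatorAddSubgroup_of_isNilpotent F (fun M ↦ (hn M).hasProjectiveDimensionLE)
      (isNilpotent_of_mem_of_isNilpotent IsSemiprimaryRing.isNilpotent hx)
  have hsplitting : IsSplittingAlgebra F A := hsplit
  exact isZpd_of_idempotentSubalgebra_eq_top (hsplitting.idempotentSubalgebra_eq_top radical_le)
end
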